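/- Fix T > 0 and S₀ > 0. With κ, κ̄, η, the payoff data as defined, and J₁(λ; t, y, z) := S₀^{y+z}·(κ̄(λ;y,z) − κ̄(λ;y,1)κ̄(λ;z,1)/κ̄(λ;1,1))·e^{κ(λ,y+z)t + (η(λ,y)+η(λ,z)−κ(λ,1)²/κ̄(λ;1,1))(T−t)}, let ε₁²(λ) := ∫_ℝ∫_ℝ∫₀ᵀ J₁(λ; t, z_u, z_v)·p(z_u)p(z_v) dt du dv for λ ∈ [0,1]. Then λ ↦ ε₁²(λ) is twice continuously differentiable on [0,1], ε₁²(0) = 0, (ε₁²)'(0) = 0, and ½·(ε₁²)''(0) = ¼σ⁴·(s₄ − s₃²)·∫₀ᵀ e^{−((μ+½σ²)²/σ²)(T−t)} ∫_ℝ D₂(t, S₀e^{μt+x})² dγ_{σ²t}(x) dt, where s₃ := (∫x³K(dx))/σ³, s₄ := (∫x⁴K(dx))/σ⁴, D₂ is the Black–Scholes cash greek of order 2, and γ_v denotes the Gaussian measure on ℝ with mean 0 and variance v. -/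

import Mathlib

open MeasureTheory ProbabilityTheory Complex Set

/-- Cumulant generating function `κ(λ, z)` of the interpolating family. -/
noncomputable def kappa (μ c : ℝ) (K : Measure ℝ) (lam : ℝ) (z : ℂ) : ℂ :=
  if lam = 0 then (μ : ℂ) * z + (((c + ∫ x : ℝ, x ^ 2 ∂K) : ℝ) : ℂ) / 2 * z ^ 2
  else (μ : ℂ) * z + (c : ℂ) / 2 * z ^ 2 +
    ((lam : ℂ) ^ 2)⁻¹ *
      ∫ x : ℝ, (Complex.exp ((lam : ℂ) * z * (x : ℂ)) - 1 - (lam : ℂ) * z * (x : ℂ)) ∂K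

noncomputable def kbar (μ c : ℝ) (K : Measure ℝ) (lam : ℝ) (y z : ℂ) : ℂ :=
  kappa μ c K lam (y + z) - kappa μ c K lam y - kappa μ c K lam z

noncomputable def gamLK (μ c : ℝ) (K : Measure ℝ) (lam : ℝ) (z : ℂ) : ℂ :=
  kbar μ c K lam z 1 / kbar μ c K lam 1 1

noncomputable def etaLK (μ c : ℝ) (K : Measure ℝ) (lam : ℝ) (z : ℂ) : ℂ :=
  kappa μ c K lam z - kappa μ c K lam 1 * gamLK μ c K lam z

noncomputable def cpowR (s : ℝ) (z : ℂ) : ℂ := Complex.exp (z * Real.log s)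

noncomputable def zLine (R y : ℝ) : ℂ := (R : ℂ) + (y : ℂ) * Complex.I

/-- Fourier transform `l̂(y) = ∫ l(x) e^{-ixy} dx`. -/
noncomputable def lhat (l : ℝ → ℝ) (y : ℝ) : ℂ :=
  ∫ x : ℝ, (l x : ℂ) * Complex.exp (-(Complex.I * (x : ℂ) * (y : ℂ)))

noncomputable def pCoef (l : ℝ → ℝ) (y : ℝ) : ℂ := lhat l y / (2 * (Real.pi : ℂ))

/-- Black-Scholes cash greek `D_n(t,s)` in integral form (with `C = D_0`). -/
noncomputable def cashGreek (σ2 T R : ℝ) (l : ℝ → ℝ) (n : ℕ) (t s : ℝ) : ℂ :=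
  ∫ y : ℝ, (∏ k ∈ Finset.range n, (zLine R y - (k : ℂ))) * cpowR s (zLine R y) *
    Complex.exp (((σ2 : ℂ) / 2) * zLine R y * (zLine R y - 1) * ((T : ℂ) - (t : ℂ))) * pCoef l y

/-!
The integrand of `ε₁²(λ)` is the Gram determinant of `kbar` against the direction `1`, times a
cofactor that is smooth in `λ`. At `λ = 0` the form `kbar` is `σ² y z`, of rank one, so the
determinant vanishes there, and a Taylor expansion shows that it vanishes to second order, with
leading coefficient `y (y - 1) z (z - 1)` times a determinant of moments of `K`. Hence the second
derivative at `0` only involves the Black-Scholes cofactor, whose exponential is a Gaussian moment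
generating function: the double Fourier integral is the Gaussian mean of a squared cash greek.

Differentiation under the integral sign needs bounds in the two Fourier variables that are
polynomial, to be beaten by the rapid decay of `pCoef`. The only delicate term is the real part of
the exponent, and positive semidefiniteness of `kbar` (Cauchy-Schwarz) bounds it above uniformly on
vertical lines.
-/

section

open Asymptotics Filter Topology ComplexConjugate

section IteratedDerivMul

variable {𝕜 𝔸 : Type*} [NontriviallyNormedField 𝕜] [NormedRing 𝔸] [NormedAlgebra 𝕜 𝔸] {s : Set 𝕜}
  {x : 𝕜} {f g : 𝕜 → 𝔸} {n : ℕ}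

theorem iteratedDerivWithin_mul_of_forall_lt_eq_zero (hx : x ∈ s) (hs : UniqueDiffOn 𝕜 s)
    (hf : ContDiffWithinAt 𝕜 n f s x) (hg : ContDiffWithinAt 𝕜 n g s x)
    (hzero : ∀ i < n, iteratedDerivWithin i f s x = 0) :
    iteratedDerivWithin n (fun y => f y * g y) s x = iteratedDerivWithin n f s x * g x := by
  refine (iteratedDerivWithin_mul hx hs hf hg).trans ?_
  rw [Finset.sum_range_succ, Finset.sum_eq_zero fun i hi => ?_]
  · simp
  · rw [hzero i (Finset.mem_range.mp hi), mul_zero, zero_mul]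

end IteratedDerivMul

section ParametricIntegral

variable {α E : Type*} [MeasurableSpace α] {ν : Measure α} [NormedAddCommGroup E]
  [NormedSpace ℝ E] {s : Set ℝ} {x : ℝ}

theorem hasDerivWithinAt_integral_of_dominated {F F' : ℝ → α → E} {B : α → ℝ} (hs : Convex ℝ s)
    (hx : x ∈ s) (hF : ∀ y ∈ s, Integrable (F y) ν) (hB : Integrable B ν)
    (hF'B : ∀ᵐ a ∂ν, ∀ y ∈ s, ‖F' y a‖ ≤ B a)
    (hderiv : ∀ᵐ a ∂ν, ∀ y ∈ s, HasDerivWithinAt (fun y => F y a) (F' y a) s y) :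
    HasDerivWithinAt (fun y => ∫ a, F y a ∂ν) (∫ a, F' x a ∂ν) s x := by
  rw [hasDerivWithinAt_iff_tendsto_slope]
  suffices h : Tendsto (fun y => ∫ a, slope (fun y => F y a) x y ∂ν) (𝓝[s \ {x}] x)
      (𝓝 (∫ a, F' x a ∂ν)) by
    refine h.congr' ?_
    filter_upwards [self_mem_nhdsWithin] with y hy
    simp only [slope_def_module]
    rw [integral_smul, integral_sub (hF y hy.1) (hF x hx)]
  refine tendsto_integral_filter_of_dominated_convergence B ?_ ?_ hB ?_
  · filter_upwards [self_mem_nhdsWithin] with y hy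
    simp only [slope_def_module]
    exact ((hF y hy.1).sub (hF x hx)).aestronglyMeasurable.const_smul _
  · filter_upwards [self_mem_nhdsWithin] with y hy
    filter_upwards [hderiv, hF'B] with a ha hab
    have hyx : 0 < ‖y - x‖ := norm_pos_iff.mpr (sub_ne_zero.mpr hy.2)
    rw [slope_def_module, norm_smul, norm_inv, inv_mul_le_iff₀ hyx, mul_comm]
    exact hs.norm_image_sub_le_of_norm_hasDerivWithin_le ha hab hx hy.1
  · filter_upwards [hderiv] with a ha
    exact hasDerivWithinAt_iff_tendsto_slope.mp (ha x hx)

end ParametricIntegral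

section PolyGrowth

variable {α : Type*} [SeminormedAddGroup α] {s : Set ℝ} {S : Set α} {F G : ℝ → α → ℂ}

/-- The family `G` is `O((1 + ‖a‖) ^ N)` for some `N`, uniformly in `x ∈ s` and `a ∈ S`. -/
def PolyGrowthOn (s : Set ℝ) (S : Set α) (G : ℝ → α → ℂ) : Prop :=
  ∃ N : ℕ, (fun p : ℝ × α => G p.1 p.2) =O[𝓟 (s ×ˢ S)] fun p => (1 + ‖p.2‖) ^ N

namespace PolyGrowthOn

theorem of_norm_le {C : ℝ} {N : ℕ} (h : ∀ x ∈ s, ∀ a ∈ S, ‖G x a‖ ≤ C * (1 + ‖a‖) ^ N) :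
    PolyGrowthOn s S G := by
  refine ⟨N, IsBigO.of_bound C (eventually_principal.mpr fun p hp => ?_)⟩
  rw [Real.norm_of_nonneg (by positivity)]
  exact h p.1 hp.1 p.2 hp.2

theorem exists_norm_le (h : PolyGrowthOn s S G) :
    ∃ (C : ℝ) (N : ℕ), ∀ x ∈ s, ∀ a ∈ S, ‖G x a‖ ≤ C * (1 + ‖a‖) ^ N := by
  obtain ⟨N, h⟩ := h
  obtain ⟨C, hC⟩ := isBigO_principal.mp h
  refine ⟨C, N, fun x hx a ha => (hC (x, a) ⟨hx, ha⟩).trans_eq ?_⟩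
  rw [Real.norm_of_nonneg (by positivity)]

theorem of_bounded {C : ℝ} (h : ∀ x ∈ s, ∀ a ∈ S, ‖G x a‖ ≤ C) : PolyGrowthOn s S G :=
  of_norm_le (C := C) (N := 0) (by simpa only [pow_zero, mul_one] using h)

theorem mono_norm (hF : PolyGrowthOn s S F) (h : ∀ x ∈ s, ∀ a ∈ S, ‖G x a‖ ≤ ‖F x a‖) :
    PolyGrowthOn s S G :=
  let ⟨_, _, hC⟩ := hF.exists_norm_le
  of_norm_le fun x hx a ha => (h x hx a ha).trans (hC x hx a ha)

theorem add (hF : PolyGrowthOn s S F) (hG : PolyGrowthOn s S G) :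
    PolyGrowthOn s S fun x a => F x a + G x a := by
  obtain ⟨M, hM⟩ := hF
  obtain ⟨N, hN⟩ := hG
  have raise {k n : ℕ} (hkn : k ≤ n) : (fun p : ℝ × α => (1 + ‖p.2‖) ^ k) =O[𝓟 (s ×ˢ S)]
      fun p => (1 + ‖p.2‖) ^ n := by
    refine isBigO_of_le _ fun p => ?_
    rw [Real.norm_of_nonneg (by positivity), Real.norm_of_nonneg (by positivity)]
    exact pow_le_pow_right₀ (by linarith [norm_nonneg p.2]) hkn
  exact ⟨max M N, (hM.trans (raise (le_max_left M N))).add (hN.trans (raise (le_max_right M N)))⟩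

theorem mul (hF : PolyGrowthOn s S F) (hG : PolyGrowthOn s S G) :
    PolyGrowthOn s S fun x a => F x a * G x a := by
  obtain ⟨M, hM⟩ := hF
  obtain ⟨N, hN⟩ := hG
  exact ⟨M + N, by simpa only [pow_add] using hM.mul hN⟩

theorem pow (hG : PolyGrowthOn s S G) (k : ℕ) : PolyGrowthOn s S fun x a => G x a ^ k :=
  let ⟨N, hN⟩ := hG
  ⟨N * k, by simpa only [pow_mul] using hN.pow k⟩

theorem of_continuousOn {g : ℝ → ℂ} (hs : IsCompact s) (hg : ContinuousOn g s) :
    PolyGrowthOn s S fun x _ => g x :=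
  let ⟨_, hC⟩ := hs.exists_bound_of_continuousOn hg
  of_bounded fun x hx _ _ => hC x hx

end PolyGrowthOn

end PolyGrowth

section Moderate

variable {α : Type*} [SeminormedAddGroup α] [MeasurableSpace α] {s : Set ℝ} {S : Set α}
  {F G : ℝ → α → ℂ} {n : ℕ}

/-- A family `G x a` that is measurable in `a`, continuous in `x ∈ s`, and polynomially bounded in
`a ∈ S`: the families that can be integrated against weights with finite polynomial moments. -/
structure Moderate (s : Set ℝ) (S : Set α) (G : ℝ → α → ℂ) : Prop where
  measurable : ∀ x ∈ s, Measurable (G x)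
  continuousOn : ∀ a ∈ S, ContinuousOn (fun x => G x a) s
  polyGrowthOn : PolyGrowthOn s S G

namespace Moderate

theorem add (hF : Moderate s S F) (hG : Moderate s S G) :
    Moderate s S fun x a => F x a + G x a where
  measurable x hx := (hF.measurable x hx).add (hG.measurable x hx)
  continuousOn a ha := (hF.continuousOn a ha).add (hG.continuousOn a ha)
  polyGrowthOn := hF.polyGrowthOn.add hG.polyGrowthOn

theorem mul (hF : Moderate s S F) (hG : Moderate s S G) :
    Moderate s S fun x a => F x a * G x a where
  measurable x hx := (hF.measurable x hx).mul (hG.measurable x hx)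
  continuousOn a ha := (hF.continuousOn a ha).mul (hG.continuousOn a ha)
  polyGrowthOn := hF.polyGrowthOn.mul hG.polyGrowthOn

theorem of_const_left {g : α → ℂ} (hg : Measurable g) (hpoly : PolyGrowthOn s S fun _ => g) :
    Moderate s S fun _ => g :=
  ⟨fun _ _ => hg, fun _ _ => continuousOn_const, hpoly⟩

theorem exp (hG : Moderate s S G) (hpoly : PolyGrowthOn s S fun x a => Complex.exp (G x a)) :
    Moderate s S fun x a => Complex.exp (G x a) where
  measurable x hx := (hG.measurable x hx).cexp
  continuousOn a ha := (hG.continuousOn a ha).cexp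
  polyGrowthOn := hpoly

theorem inv (hG : Moderate s S G) (hne : ∀ x ∈ s, ∀ a ∈ S, G x a ≠ 0)
    (hpoly : PolyGrowthOn s S fun x a => (G x a)⁻¹) : Moderate s S fun x a => (G x a)⁻¹ where
  measurable x hx := (hG.measurable x hx).inv
  continuousOn a ha := (hG.continuousOn a ha).inv₀ fun x hx => hne x hx a ha
  polyGrowthOn := hpoly

end Moderate

/-- Families that are `n` times continuously differentiable in `x ∈ s` for each `a ∈ S`, with all
derivatives `Moderate`. The derivatives are those within `s`. -/
def ModerateContDiff (s : Set ℝ) (S : Set α) : ℕ → (ℝ → α → ℂ) → Prop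
  | 0, G => Moderate s S G
  | n + 1, G => Moderate s S G ∧ ∃ G', ModerateContDiff s S n G' ∧
      ∀ a ∈ S, ∀ x ∈ s, HasDerivWithinAt (fun y => G y a) (G' x a) s x

namespace ModerateContDiff

theorem moderate (hG : ModerateContDiff s S n G) : Moderate s S G :=
  match n, hG with
  | 0, hG => hG
  | _ + 1, hG => hG.1

theorem of_succ (hG : ModerateContDiff s S (n + 1) G) : ModerateContDiff s S n G := by
  induction n generalizing G with
  | zero => exact hG.moderate
  | succ n ih =>
    obtain ⟨hG0, G', hG', hderiv⟩ := hG
    exact ⟨hG0, G', ih hG', hderiv⟩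

theorem of_const_left {g : α → ℂ} (hg : Measurable g) (hpoly : PolyGrowthOn s S fun _ => g) :
    ModerateContDiff s S n fun _ => g := by
  induction n generalizing g with
  | zero => exact Moderate.of_const_left hg hpoly
  | succ n ih =>
    have hzero : ModerateContDiff s S n fun _ _ => 0 :=
      ih measurable_const (.of_bounded (C := 0) fun _ _ _ _ => norm_zero.le)
    exact ⟨.of_const_left hg hpoly, _, hzero, fun _ _ _ _ => hasDerivWithinAt_const _ _ _⟩

theorem const (c : ℂ) : ModerateContDiff s S n fun _ _ => c :=
  of_const_left measurable_const (.of_bounded fun _ _ _ _ => le_rfl)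

theorem add (hF : ModerateContDiff s S n F) (hG : ModerateContDiff s S n G) :
    ModerateContDiff s S n fun x a => F x a + G x a := by
  induction n generalizing F G with
  | zero => exact Moderate.add hF hG
  | succ n ih =>
    obtain ⟨hF0, F', hF', hFderiv⟩ := hF
    obtain ⟨hG0, G', hG', hGderiv⟩ := hG
    exact ⟨hF0.add hG0, _, ih hF' hG',
      fun a ha x hx => (hFderiv a ha x hx).add (hGderiv a ha x hx)⟩

theorem mul (hF : ModerateContDiff s S n F) (hG : ModerateContDiff s S n G) :
    ModerateContDiff s S n fun x a => F x a * G x a := by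
  induction n generalizing F G with
  | zero => exact Moderate.mul hF hG
  | succ n ih =>
    have hF₁ := hF.of_succ
    have hG₁ := hG.of_succ
    obtain ⟨hF0, F', hF', hFderiv⟩ := hF
    obtain ⟨hG0, G', hG', hGderiv⟩ := hG
    exact ⟨hF0.mul hG0, _, (ih hF' hG₁).add (ih hF₁ hG'),
      fun a ha x hx => (hFderiv a ha x hx).mul (hGderiv a ha x hx)⟩

theorem const_mul (c : ℂ) (hG : ModerateContDiff s S n G) :
    ModerateContDiff s S n fun x a => c * G x a :=
  (const c).mul hG

theorem sub (hF : ModerateContDiff s S n F) (hG : ModerateContDiff s S n G) :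
    ModerateContDiff s S n fun x a => F x a - G x a := by
  simpa only [neg_one_mul, ← sub_eq_add_neg] using hF.add (hG.const_mul (-1))

theorem exp (hG : ModerateContDiff s S n G)
    (hpoly : PolyGrowthOn s S fun x a => Complex.exp (G x a)) :
    ModerateContDiff s S n fun x a => Complex.exp (G x a) := by
  induction n with
  | zero => exact Moderate.exp hG hpoly
  | succ n ih =>
    have hexp := ih hG.of_succ
    obtain ⟨hG0, G', hG', hderiv⟩ := hG
    exact ⟨hG0.exp hpoly, _, hexp.mul hG', fun a ha x hx => (hderiv a ha x hx).cexp⟩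

theorem inv (hG : ModerateContDiff s S n G) (hne : ∀ x ∈ s, ∀ a ∈ S, G x a ≠ 0)
    (hpoly : PolyGrowthOn s S fun x a => (G x a)⁻¹) :
    ModerateContDiff s S n fun x a => (G x a)⁻¹ := by
  induction n with
  | zero => exact Moderate.inv hG hne hpoly
  | succ n ih =>
    have hinv := ih hG.of_succ
    obtain ⟨hG0, G', hG', hderiv⟩ := hG
    refine ⟨hG0.inv hne hpoly, _, (hG'.const_mul (-1)).mul (hinv.mul hinv),
      fun a ha x hx => ((hderiv a ha x hx).fun_inv (hne x hx a ha)).congr_deriv ?_⟩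
    have := hne x hx a ha
    field_simp

theorem congr (hF : ModerateContDiff s S n F) (h : ∀ x ∈ s, ∀ a, G x a = F x a) :
    ModerateContDiff s S n G := by
  have hmoderate (hF : Moderate s S F) : Moderate s S G :=
    ⟨fun x hx => (funext (h x hx) : G x = F x) ▸ hF.measurable x hx,
      fun a ha => (hF.continuousOn a ha).congr fun x hx => h x hx a,
      hF.polyGrowthOn.mono_norm fun x hx a _ => (congrArg norm (h x hx a)).le⟩
  cases n with
  | zero => exact hmoderate hF
  | succ n =>
    obtain ⟨hF0, F', hF', hderiv⟩ := hF
    exact ⟨hmoderate hF0, F', hF', fun a ha x hx =>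
      (hderiv a ha x hx).congr (fun y hy => h y hy a) (h x hx a)⟩

theorem contDiffOn (hG : ModerateContDiff s S n G) (hs : UniqueDiffOn ℝ s) {a : α}
    (ha : a ∈ S) : ContDiffOn ℝ n (fun x => G x a) s := by
  induction n generalizing G with
  | zero => exact contDiffOn_zero.mpr (hG.moderate.continuousOn a ha)
  | succ n ih =>
    obtain ⟨-, G', hG', hderiv⟩ := hG
    rw [Nat.cast_succ, contDiffOn_succ_iff_derivWithin hs]
    exact ⟨fun x hx => (hderiv a ha x hx).differentiableWithinAt, by simp,
      (ih hG').congr fun x hx => (hderiv a ha x hx).derivWithin (hs x hx)⟩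

theorem exists_moderate_iteratedDerivWithin (hs : UniqueDiffOn ℝ s)
    (hG : ModerateContDiff s S n G) : ∃ D, Moderate s S D ∧
      ∀ a ∈ S, ∀ x ∈ s, iteratedDerivWithin n (fun y => G y a) s x = D x a := by
  induction n generalizing G with
  | zero => exact ⟨G, hG, fun a _ x _ => by rw [iteratedDerivWithin_zero]⟩
  | succ n ih =>
    obtain ⟨-, G', hG', hderiv⟩ := hG
    obtain ⟨D, hD, hD_eq⟩ := ih hG'
    refine ⟨D, hD, fun a ha x hx => ?_⟩
    rw [iteratedDerivWithin_succ', ← hD_eq a ha x hx]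
    exact iteratedDerivWithin_congr (fun y hy => (hderiv a ha y hy).derivWithin (hs y hy)) hx

end ModerateContDiff

end Moderate

section PolyMoments

variable {α β : Type*} [NormedAddCommGroup α] [MeasurableSpace α] [NormedAddCommGroup β]
  [MeasurableSpace β]

/-- The weight `p` has finite absolute moments of all orders with respect to `ν`. -/
structure HasPolyMoments (p : α → ℂ) (ν : Measure α) : Prop where
  aestronglyMeasurable : AEStronglyMeasurable p ν
  integrable : ∀ N : ℕ, Integrable (fun a => (1 + ‖a‖) ^ N * ‖p a‖) ν

namespace HasPolyMoments

variable {p : α → ℂ} {q : β → ℂ} {ν : Measure α} {ρ : Measure β}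

theorem mul_prod [OpensMeasurableSpace α] [OpensMeasurableSpace β]
    (hp : HasPolyMoments p ν) (hq : HasPolyMoments q ρ) :
    HasPolyMoments (fun a : α × β => p a.1 * q a.2) (ν.prod ρ) where
  aestronglyMeasurable := hp.aestronglyMeasurable.comp_fst.mul hq.aestronglyMeasurable.comp_snd
  integrable N := by
    refine ((hp.integrable N).mul_prod (hq.integrable N)).mono' ?_ (.of_forall fun a => ?_)
    · have hnorm : Measurable fun a : α × β => ‖a‖ := by
        simp only [Prod.norm_def]
        exact measurable_fst.norm.max measurable_snd.norm
      exact ((hnorm.const_add 1).pow_const N).aestronglyMeasurable.mul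
        (hp.aestronglyMeasurable.comp_fst.mul hq.aestronglyMeasurable.comp_snd).norm
    · have hmax : 1 + ‖a‖ ≤ (1 + ‖a.1‖) * (1 + ‖a.2‖) := by
        rw [Prod.norm_def]
        rcases max_cases ‖a.1‖ ‖a.2‖ with ⟨h, -⟩ | ⟨h, -⟩ <;>
          nlinarith [norm_nonneg a.1, norm_nonneg a.2,
            mul_nonneg (norm_nonneg a.1) (norm_nonneg a.2)]
      calc ‖(1 + ‖a‖) ^ N * ‖p a.1 * q a.2‖‖ = (1 + ‖a‖) ^ N * (‖p a.1‖ * ‖q a.2‖) := by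
            rw [norm_mul (p a.1), Real.norm_of_nonneg (by positivity)]
        _ ≤ ((1 + ‖a.1‖) * (1 + ‖a.2‖)) ^ N * (‖p a.1‖ * ‖q a.2‖) := by gcongr
        _ = (1 + ‖a.1‖) ^ N * ‖p a.1‖ * ((1 + ‖a.2‖) ^ N * ‖q a.2‖) := by
            rw [mul_pow]; ring

end HasPolyMoments

end PolyMoments

section ModerateIntegral

variable {α : Type*} [NormedAddCommGroup α] [MeasurableSpace α] {s : Set ℝ} {S : Set α}
  {G : ℝ → α → ℂ} {p : α → ℂ} {ν : Measure α} {n : ℕ}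

theorem PolyGrowthOn.exists_integrable_bound (hG : PolyGrowthOn s S G) (hp : HasPolyMoments p ν) :
    ∃ B : α → ℝ, Integrable B ν ∧ ∀ x ∈ s, ∀ a ∈ S, ‖G x a * p a‖ ≤ B a := by
  obtain ⟨C, N, hC⟩ := hG.exists_norm_le
  refine ⟨fun a => C * ((1 + ‖a‖) ^ N * ‖p a‖), (hp.integrable N).const_mul C,
    fun x hx a ha => ?_⟩
  simp only [norm_mul, ← mul_assoc]
  exact mul_le_mul_of_nonneg_right (hC x hx a ha) (norm_nonneg _)

theorem Moderate.integrable_mul (hG : Moderate s S G) (hp : HasPolyMoments p ν)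
    (hS : ∀ᵐ a ∂ν, a ∈ S) {x : ℝ} (hx : x ∈ s) : Integrable (fun a => G x a * p a) ν := by
  obtain ⟨B, hB, hGB⟩ := hG.polyGrowthOn.exists_integrable_bound hp
  exact hB.mono' ((hG.measurable x hx).aestronglyMeasurable.mul hp.aestronglyMeasurable)
    (hS.mono fun a ha => hGB x hx a ha)

theorem Moderate.continuousOn_integral (hG : Moderate s S G) (hp : HasPolyMoments p ν)
    (hS : ∀ᵐ a ∂ν, a ∈ S) : ContinuousOn (fun x => ∫ a, G x a * p a ∂ν) s := by
  obtain ⟨B, hB, hGB⟩ := hG.polyGrowthOn.exists_integrable_bound hp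
  exact continuousOn_of_dominated
    (fun x hx => (hG.integrable_mul hp hS hx).aestronglyMeasurable)
    (fun x hx => hS.mono fun a ha => hGB x hx a ha) hB
    (hS.mono fun a ha => (hG.continuousOn a ha).mul continuousOn_const)

theorem Moderate.hasDerivWithinAt_integral {G' : ℝ → α → ℂ} (hG : Moderate s S G)
    (hG' : Moderate s S G')
    (hderiv : ∀ a ∈ S, ∀ x ∈ s, HasDerivWithinAt (fun y => G y a) (G' x a) s x)
    (hs : Convex ℝ s) (hp : HasPolyMoments p ν) (hS : ∀ᵐ a ∂ν, a ∈ S) {x : ℝ} (hx : x ∈ s) :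
    HasDerivWithinAt (fun y => ∫ a, G y a * p a ∂ν) (∫ a, G' x a * p a ∂ν) s x := by
  obtain ⟨B, hB, hGB⟩ := hG'.polyGrowthOn.exists_integrable_bound hp
  exact hasDerivWithinAt_integral_of_dominated hs hx (fun y hy => hG.integrable_mul hp hS hy) hB
    (hS.mono fun a ha y hy => hGB y hy a ha)
    (hS.mono fun a ha y hy => (hderiv a ha y hy).mul_const (p a))

namespace ModerateContDiff

theorem contDiffOn_integral (hG : ModerateContDiff s S n G) (hs : Convex ℝ s)
    (hs' : UniqueDiffOn ℝ s) (hp : HasPolyMoments p ν) (hS : ∀ᵐ a ∂ν, a ∈ S) :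
    ContDiffOn ℝ n (fun x => ∫ a, G x a * p a ∂ν) s := by
  induction n generalizing G with
  | zero => exact contDiffOn_zero.mpr (hG.moderate.continuousOn_integral hp hS)
  | succ n ih =>
    obtain ⟨hG0, G', hG', hderiv⟩ := hG
    have hint (x) (hx : x ∈ s) := hG0.hasDerivWithinAt_integral hG'.moderate hderiv hs hp hS hx
    rw [Nat.cast_succ, contDiffOn_succ_iff_derivWithin hs']
    exact ⟨fun x hx => (hint x hx).differentiableWithinAt, by simp,
      (ih hG').congr fun x hx => (hint x hx).derivWithin (hs' x hx)⟩

theorem iteratedDerivWithin_integral (hG : ModerateContDiff s S n G) (hs : Convex ℝ s)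
    (hs' : UniqueDiffOn ℝ s) (hp : HasPolyMoments p ν) (hS : ∀ᵐ a ∂ν, a ∈ S) {x : ℝ}
    (hx : x ∈ s) :
    iteratedDerivWithin n (fun x => ∫ a, G x a * p a ∂ν) s x =
      ∫ a, iteratedDerivWithin n (fun x => G x a) s x * p a ∂ν := by
  induction n generalizing G with
  | zero => simp only [iteratedDerivWithin_zero]
  | succ n ih =>
    obtain ⟨hG0, G', hG', hderiv⟩ := hG
    have hint (x) (hx : x ∈ s) := hG0.hasDerivWithinAt_integral hG'.moderate hderiv hs hp hS hx
    simp only [iteratedDerivWithin_succ']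
    rw [iteratedDerivWithin_congr (fun y hy => (hint y hy).derivWithin (hs' y hy)) hx, ih hG']
    refine integral_congr_ae (hS.mono fun a ha => ?_)
    simp only
    rw [iteratedDerivWithin_congr
      (fun y hy => (hderiv a ha y hy).derivWithin (hs' y hy)) hx]

theorem integrable_iteratedDerivWithin_mul (hG : ModerateContDiff s S n G)
    (hs : UniqueDiffOn ℝ s) (hp : HasPolyMoments p ν) (hS : ∀ᵐ a ∂ν, a ∈ S) {x : ℝ} (hx : x ∈ s) :
    Integrable (fun a => iteratedDerivWithin n (fun x => G x a) s x * p a) ν := by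
  obtain ⟨D, hD, hD_eq⟩ := hG.exists_moderate_iteratedDerivWithin hs
  exact (hD.integrable_mul hp hS hx).congr (hS.mono fun a ha => by simp only [hD_eq a ha x hx])

end ModerateContDiff

end ModerateIntegral

section LevyMeasure

variable {K : Measure ℝ}

theorem sFinite_of_lintegral_min_sq_ne_top (hK0 : K {0} = 0)
    (hKmin : ∫⁻ x : ℝ, ENNReal.ofReal (min 1 (x ^ 2)) ∂K ≠ ⊤) : SFinite K := by
  set g : ℝ → ENNReal := fun x => ENNReal.ofReal (min 1 (x ^ 2)) with hg
  have : IsFiniteMeasure (K.withDensity g) := isFiniteMeasure_withDensity hKmin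
  have hne : ∀ᵐ x ∂K, g x ≠ 0 := by
    have hx0 : ∀ᵐ x ∂K, x ≠ 0 := by simpa only [ae_iff, not_not, ofPred_eq_eq_singleton] using hK0
    filter_upwards [hx0] with x hx
    have : 0 < x ^ 2 := by positivity
    simp only [hg, ne_eq, ENNReal.ofReal_eq_zero, not_le]
    positivity
  rw [← withDensity_inv_same (by fun_prop : Measurable g) hne
    (.of_forall fun x => ENNReal.ofReal_ne_top)]
  infer_instance

/-- A convex set `J ∋ 0` of exponents `ρ` for which all functions `|x| ^ n * exp (ρ * x)` with
`2 ≤ n` are `K`-integrable. -/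
structure IsExpMomentStrip (K : Measure ℝ) (J : Set ℝ) : Prop where
  convex : Convex ℝ J
  zero_mem : 0 ∈ J
  integrable : ∀ ρ ∈ J, ∀ n : ℕ, 2 ≤ n → Integrable (fun x : ℝ => |x| ^ n * Real.exp (ρ * x)) K

theorem abs_pow_mul_exp_le_exp_mul_min {x : ℝ} (hx : |x| ≤ 1) (ρ : ℝ) {n : ℕ} (hn : 2 ≤ n) :
    |x| ^ n * Real.exp (ρ * x) ≤ Real.exp |ρ| * min 1 (x ^ 2) := by
  have hpow : |x| ^ n ≤ x ^ 2 := by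
    rw [← sq_abs]
    exact pow_le_pow_of_le_one (abs_nonneg x) hx hn
  have hexp : ρ * x ≤ |ρ| :=
    calc ρ * x ≤ |ρ * x| := le_abs_self _
      _ = |ρ| * |x| := abs_mul ρ x
      _ ≤ |ρ| := mul_le_of_le_one_right (abs_nonneg ρ) hx
  rw [min_eq_right (by simpa only [sq_abs] using pow_le_one₀ (n := 2) (abs_nonneg x) hx), mul_comm]
  gcongr

theorem isExpMomentStrip_Ioo {a b : ℝ} (h0 : (0 : ℝ) ∈ Ioo a b)
    (hKmin : ∫⁻ x : ℝ, ENNReal.ofReal (min 1 (x ^ 2)) ∂K ≠ ⊤)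
    (hKexp : ∀ s ∈ Ioo a b,
      ∫⁻ x in {x : ℝ | 1 ≤ |x|}, ENNReal.ofReal (Real.exp (s * x)) ∂K ≠ ⊤) :
    IsExpMomentStrip K (Ioo a b) := by
  refine ⟨convex_Ioo a b, h0, fun ρ hρ n hn => ?_⟩
  have hlarge : IntegrableOn (fun x => |x| ^ n * Real.exp (ρ * x)) {x : ℝ | 1 ≤ |x|} K := by
    refine integrable_pow_abs_mul_exp_of_mem_interior_integrableExpSet (X := fun x : ℝ => x) ?_ n
    refine interior_maximal (fun s hs => ?_) isOpen_Ioo hρ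
    exact (lintegral_ofReal_ne_top_iff_integrable (by fun_prop)
      (.of_forall fun x => (Real.exp_pos _).le)).mp (hKexp s hs)
  have hmin : Integrable (fun x : ℝ => min 1 (x ^ 2)) K :=
    (lintegral_ofReal_ne_top_iff_integrable (by fun_prop)
      (.of_forall fun x => by positivity)).mp hKmin
  have hlargeSet : MeasurableSet {x : ℝ | 1 ≤ |x|} :=
    measurableSet_le measurable_const (by fun_prop)
  have hsmall : IntegrableOn (fun x => |x| ^ n * Real.exp (ρ * x)) {x : ℝ | 1 ≤ |x|}ᶜ K := by
    refine (hmin.const_mul (Real.exp |ρ|)).integrableOn.mono' (by fun_prop) ?_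
    filter_upwards [ae_restrict_mem hlargeSet.compl] with x (hx : ¬1 ≤ |x|)
    rw [Real.norm_of_nonneg (by positivity)]
    exact abs_pow_mul_exp_le_exp_mul_min (not_le.mp hx).le ρ hn
  simpa only [union_compl_self, integrableOn_univ] using hlarge.union hsmall

end LevyMeasure

section JumpCumulant

variable {K : Measure ℝ} {J : Set ℝ}

theorem integral_one_sub_mul_pow (j : ℕ) :
    ∫ s in (0 : ℝ)..1, (1 - s) * s ^ j = 1 / ((j + 1) * (j + 2)) := by
  have hsub (s : ℝ) : (1 - s) * s ^ j = s ^ j - s ^ (j + 1) := by ring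
  simp only [hsub]
  rw [intervalIntegral.integral_sub (by simp) (by simp), integral_pow, integral_pow]
  push_cast
  field_simp
  simp
  ring

theorem integral_one_sub_mul_sq_mul_exp (w : ℂ) :
    ∫ s in (0 : ℝ)..1, (1 - s) * w ^ 2 * Complex.exp (s * w) = Complex.exp w - 1 - w := by
  have hderiv (s : ℝ) : HasDerivAt
      (fun s : ℝ => (1 - s) * w * Complex.exp (s * w) + Complex.exp (s * w))
      ((1 - s) * w ^ 2 * Complex.exp (s * w)) s := by
    have hs : HasDerivAt (fun s : ℝ => (s : ℂ)) 1 s := Complex.ofRealCLM.hasDerivAt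
    have hexp := (hs.mul_const w).cexp
    exact ((((hs.const_sub 1).mul_const w).mul hexp).add hexp).congr_deriv (by ring)
  rw [intervalIntegral.integral_eq_sub_of_hasDerivAt (fun s _ => hderiv s)
    (Continuous.intervalIntegrable (by fun_prop) _ _)]
  simp only [Complex.ofReal_one, Complex.ofReal_zero, sub_self, zero_mul, one_mul, sub_zero,
    Complex.exp_zero, zero_add]
  ring

/-- The integrand in the Taylor remainder formula
`(exp (λ z x) - 1 - λ z x) / λ ^ 2 = ∫ s in 0..1, (1 - s) (z x) ^ 2 exp (λ s z x)`, differentiated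
`j` times with respect to `λ`; the variable is `p = (x, s)`. -/
noncomputable def jumpKernel (j : ℕ) (lam : ℝ) (z : ℂ) (p : ℝ × ℝ) : ℂ :=
  (1 - p.2) * p.2 ^ j * (z * p.1) ^ (j + 2) * Complex.exp (lam * (p.2 * (z * p.1)))

/-- The `j`-th derivative in `λ` of the jump part `λ⁻² ∫ (exp (λ z x) - 1 - λ z x) K(dx)` of the
cumulant generating function, in a form that is regular at `λ = 0`. -/
noncomputable def jumpCumulant (K : Measure ℝ) (j : ℕ) (lam : ℝ) (z : ℂ) : ℂ :=
  ∫ p, jumpKernel j lam z p ∂K.prod (volume.restrict (Ioc (0 : ℝ) 1))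

theorem measurable_jumpKernel (j : ℕ) (lam : ℝ) (z : ℂ) : Measurable (jumpKernel j lam z) := by
  unfold jumpKernel
  fun_prop

theorem measurable_jumpCumulant (K : Measure ℝ) [SFinite K] (j : ℕ) (lam : ℝ) :
    Measurable (jumpCumulant K j lam) := by
  have h : Measurable fun q : ℂ × (ℝ × ℝ) => jumpKernel j lam q.1 q.2 := by
    unfold jumpKernel
    fun_prop
  exact h.stronglyMeasurable.integral_prod_right.measurable

theorem exp_mul_le_one_add_exp {r : ℝ} (hr : r ∈ Icc (0 : ℝ) 1) (y : ℝ) :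
    Real.exp (r * y) ≤ 1 + Real.exp y := by
  have h := convexOn_exp.2 (mem_univ y) (mem_univ 0) hr.1 (sub_nonneg.mpr hr.2) (by ring)
  simp only [smul_eq_mul, mul_zero, add_zero, Real.exp_zero, mul_one] at h
  nlinarith [Real.exp_pos y, hr.1, hr.2]

theorem norm_jumpKernel_le {lam : ℝ} (hlam : lam ∈ Icc (0 : ℝ) 1) {p : ℝ × ℝ}
    (hp : p.2 ∈ Ioc (0 : ℝ) 1) (j : ℕ) (z : ℂ) :
    ‖jumpKernel j lam z p‖ ≤
      ‖z‖ ^ (j + 2) * (|p.1| ^ (j + 2) * (1 + Real.exp (z.re * p.1))) := by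
  obtain ⟨x, s⟩ := p
  have hweight : ‖(1 - s : ℂ) * (s : ℂ) ^ j‖ ≤ 1 := by
    have h1 : ‖(1 - s : ℂ)‖ ≤ 1 := by
      rw [← Complex.ofReal_one, ← Complex.ofReal_sub, Complex.norm_real, Real.norm_eq_abs, abs_le]
      constructor <;> linarith [hp.1, hp.2]
    have h2 : ‖(s : ℂ)‖ ≤ 1 := by
      rw [Complex.norm_real, Real.norm_of_nonneg hp.1.le]
      exact hp.2
    rw [norm_mul, norm_pow]
    exact mul_le_one₀ h1 (by positivity) (pow_le_one₀ (norm_nonneg _) h2)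
  have hexp : ‖Complex.exp (lam * (s * (z * x)))‖ ≤ 1 + Real.exp (z.re * x) := by
    have hre : (lam * (s * (z * x)) : ℂ).re = lam * s * (z.re * x) := by
      simp only [Complex.re_ofReal_mul, Complex.re_mul_ofReal]
      ring
    rw [Complex.norm_exp, hre]
    exact exp_mul_le_one_add_exp
      ⟨mul_nonneg hlam.1 hp.1.le, mul_le_one₀ hlam.2 hp.1.le hp.2⟩ _
  calc ‖jumpKernel j lam z (x, s)‖
      = ‖(1 - s : ℂ) * (s : ℂ) ^ j‖ * (‖z‖ * |x|) ^ (j + 2) *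
          ‖Complex.exp (lam * (s * (z * x)))‖ := by
        rw [jumpKernel, norm_mul, norm_mul, norm_pow, norm_mul z, Complex.norm_real,
          Real.norm_eq_abs]
    _ ≤ 1 * (‖z‖ * |x|) ^ (j + 2) * (1 + Real.exp (z.re * x)) := by gcongr
    _ = ‖z‖ ^ (j + 2) * (|x| ^ (j + 2) * (1 + Real.exp (z.re * x))) := by ring

theorem hasDerivAt_jumpKernel (j : ℕ) (lam : ℝ) (z : ℂ) (p : ℝ × ℝ) :
    HasDerivAt (fun lam => jumpKernel j lam z p) (jumpKernel (j + 1) lam z p) lam := by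
  have hlam : HasDerivAt (fun lam : ℝ => (lam : ℂ)) 1 lam := Complex.ofRealCLM.hasDerivAt
  refine ((hlam.mul_const (p.2 * (z * p.1) : ℂ)).cexp.const_mul
    ((1 - p.2) * p.2 ^ j * (z * p.1) ^ (j + 2) : ℂ)).congr_deriv ?_
  rw [jumpKernel]
  ring

theorem ae_snd_mem_Ioc (K : Measure ℝ) :
    ∀ᵐ p ∂K.prod (volume.restrict (Ioc (0 : ℝ) 1)), p.2 ∈ Ioc (0 : ℝ) 1 :=
  Measure.quasiMeasurePreserving_snd.ae (ae_restrict_mem measurableSet_Ioc)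

namespace IsExpMomentStrip

theorem integrable_abs_pow_mul_one_add_exp (hJ : IsExpMomentStrip K J) {ρ : ℝ} (hρ : ρ ∈ J)
    {n : ℕ} (hn : 2 ≤ n) : Integrable (fun x : ℝ => |x| ^ n * (1 + Real.exp (ρ * x))) K := by
  refine ((hJ.integrable 0 hJ.zero_mem n hn).add (hJ.integrable ρ hρ n hn)).congr
    (.of_forall fun x => ?_)
  simp only [Pi.add_apply, zero_mul, Real.exp_zero]
  ring

theorem integrable_sq (hJ : IsExpMomentStrip K J) : Integrable (fun x : ℝ => x ^ 2) K := by
  simpa only [zero_mul, Real.exp_zero, mul_one, sq_abs] using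
    hJ.integrable 0 hJ.zero_mem 2 le_rfl

theorem integrable_jumpKernel_bound (hJ : IsExpMomentStrip K J) {z : ℂ} (hz : z.re ∈ J) (j : ℕ) :
    Integrable (fun p : ℝ × ℝ =>
      ‖z‖ ^ (j + 2) * (|p.1| ^ (j + 2) * (1 + Real.exp (z.re * p.1))))
      (K.prod (volume.restrict (Ioc (0 : ℝ) 1))) :=
  ((hJ.integrable_abs_pow_mul_one_add_exp hz (Nat.le_add_left 2 j)).const_mul _).comp_fst _

theorem integrable_jumpKernel (hJ : IsExpMomentStrip K J) {lam : ℝ} (hlam : lam ∈ Icc (0 : ℝ) 1)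
    {z : ℂ} (hz : z.re ∈ J) (j : ℕ) :
    Integrable (jumpKernel j lam z) (K.prod (volume.restrict (Ioc (0 : ℝ) 1))) :=
  (hJ.integrable_jumpKernel_bound hz j).mono' (measurable_jumpKernel j lam z).aestronglyMeasurable
    ((ae_snd_mem_Ioc K).mono fun _ hp => norm_jumpKernel_le hlam hp j z)

theorem hasDerivWithinAt_jumpCumulant (hJ : IsExpMomentStrip K J) {lam : ℝ}
    (hlam : lam ∈ Icc (0 : ℝ) 1) {z : ℂ} (hz : z.re ∈ J) (j : ℕ) :
    HasDerivWithinAt (fun lam => jumpCumulant K j lam z) (jumpCumulant K (j + 1) lam z)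
      (Icc 0 1) lam :=
  hasDerivWithinAt_integral_of_dominated (convex_Icc 0 1) hlam
    (fun _ hy => hJ.integrable_jumpKernel hy hz j) (hJ.integrable_jumpKernel_bound hz (j + 1))
    ((ae_snd_mem_Ioc K).mono fun _ hp _ hy => norm_jumpKernel_le hy hp (j + 1) z)
    (.of_forall fun p y _ => (hasDerivAt_jumpKernel j y z p).hasDerivWithinAt)

variable [SFinite K]

theorem norm_jumpCumulant_le (hJ : IsExpMomentStrip K J) {lam : ℝ} (hlam : lam ∈ Icc (0 : ℝ) 1)
    {z : ℂ} (hz : z.re ∈ J) (j : ℕ) :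
    ‖jumpCumulant K j lam z‖ ≤
      ‖z‖ ^ (j + 2) * ∫ x, |x| ^ (j + 2) * (1 + Real.exp (z.re * x)) ∂K := by
  refine (norm_integral_le_of_norm_le (hJ.integrable_jumpKernel_bound hz j)
    ((ae_snd_mem_Ioc K).mono fun _ hp => norm_jumpKernel_le hlam hp j z)).trans_eq ?_
  rw [integral_const_mul, integral_fun_fst
    (fun x : ℝ => |x| ^ (j + 2) * (1 + Real.exp (z.re * x)))]
  simp

end IsExpMomentStrip

theorem jumpCumulant_zero [SFinite K] (j : ℕ) (z : ℂ) :
    jumpCumulant K j 0 z = z ^ (j + 2) * (∫ x, x ^ (j + 2) ∂K : ℝ) / ((j + 1) * (j + 2)) := by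
  have hkernel (p : ℝ × ℝ) : jumpKernel j 0 z p =
      z ^ (j + 2) * ((p.1 ^ (j + 2) * ((1 - p.2) * p.2 ^ j) : ℝ) : ℂ) := by
    simp only [jumpKernel, Complex.ofReal_zero, zero_mul, Complex.exp_zero]
    push_cast
    ring
  simp only [jumpCumulant, hkernel]
  rw [integral_const_mul, integral_complex_ofReal,
    integral_prod_mul (fun x : ℝ => x ^ (j + 2)) fun s : ℝ => (1 - s) * s ^ j,
    ← intervalIntegral.integral_of_le zero_le_one, integral_one_sub_mul_pow]
  push_cast
  ring

theorem exp_sub_one_sub_eq_integral_jumpKernel (lam : ℝ) (z : ℂ) (x : ℝ) :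
    Complex.exp (lam * z * x) - 1 - lam * z * x =
      lam ^ 2 * ∫ s in Ioc (0 : ℝ) 1, jumpKernel 0 lam z (x, s) := by
  rw [← integral_one_sub_mul_sq_mul_exp, intervalIntegral.integral_of_le zero_le_one,
    ← integral_const_mul]
  refine integral_congr_ae (.of_forall fun s => ?_)
  simp only [jumpKernel]
  ring_nf

namespace IsExpMomentStrip

theorem integrable_exp_sub_one_sub (hJ : IsExpMomentStrip K J) {lam : ℝ}
    (hlam : lam ∈ Icc (0 : ℝ) 1) {z : ℂ} (hz : z.re ∈ J) :
    Integrable (fun x : ℝ => Complex.exp (lam * z * x) - 1 - lam * z * x) K := by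
  simp only [exp_sub_one_sub_eq_integral_jumpKernel]
  exact (hJ.integrable_jumpKernel hlam hz 0).integral_prod_left.const_mul _

variable [SFinite K]

theorem kappa_eq_add_jumpCumulant (hJ : IsExpMomentStrip K J) (μ c : ℝ) {lam : ℝ}
    (hlam : lam ∈ Icc (0 : ℝ) 1) {z : ℂ} (hz : z.re ∈ J) :
    kappa μ c K lam z = μ * z + c / 2 * z ^ 2 + jumpCumulant K 0 lam z := by
  rw [kappa]
  split_ifs with h
  · rw [h, jumpCumulant_zero]
    push_cast
    ring
  · have hlam0 : (lam : ℂ) ≠ 0 := Complex.ofReal_ne_zero.mpr h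
    simp only [exp_sub_one_sub_eq_integral_jumpKernel]
    rw [integral_const_mul, inv_mul_cancel_left₀ (pow_ne_zero 2 hlam0), jumpCumulant,
      integral_prod _ (hJ.integrable_jumpKernel hlam hz 0)]

theorem hasDerivWithinAt_kappa (hJ : IsExpMomentStrip K J) (μ c : ℝ) {lam : ℝ}
    (hlam : lam ∈ Icc (0 : ℝ) 1) {z : ℂ} (hz : z.re ∈ J) :
    HasDerivWithinAt (fun lam => kappa μ c K lam z) (jumpCumulant K 1 lam z) (Icc 0 1) lam :=
  ((hJ.hasDerivWithinAt_jumpCumulant hlam hz 0).const_add _).congr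
    (fun _ hy => hJ.kappa_eq_add_jumpCumulant μ c hy hz) (hJ.kappa_eq_add_jumpCumulant μ c hlam hz)

end IsExpMomentStrip

end JumpCumulant

section VerticalFamily

variable {α : Type*} [SeminormedAddGroup α] [MeasurableSpace α] {S : Set α} {Y Z : α → ℂ}
  {ρ τ : ℝ}

/-- A measurable family of points on the vertical line `re z = ρ`, growing at most polynomially on
`S`. The first set in `PolyGrowthOn` is the range of `λ`. -/
structure IsVerticalFamily (S : Set α) (ρ : ℝ) (Z : α → ℂ) : Prop where
  measurable : Measurable Z
  re_eq : ∀ a, (Z a).re = ρ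
  polyGrowthOn : PolyGrowthOn (Icc 0 1) S fun _ => Z

namespace IsVerticalFamily

theorem const (z : ℂ) : IsVerticalFamily S z.re fun _ => z :=
  ⟨measurable_const, fun _ => rfl, .of_bounded fun _ _ _ _ => le_rfl⟩

theorem add (hY : IsVerticalFamily S ρ Y) (hZ : IsVerticalFamily S τ Z) :
    IsVerticalFamily S (ρ + τ) fun a => Y a + Z a where
  measurable := hY.measurable.add hZ.measurable
  re_eq a := by rw [Complex.add_re, hY.re_eq, hZ.re_eq]
  polyGrowthOn := hY.polyGrowthOn.add hZ.polyGrowthOn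

end IsVerticalFamily

namespace IsExpMomentStrip

variable {K : Measure ℝ} [SFinite K] {J : Set ℝ}

theorem moderate_jumpCumulant (hJ : IsExpMomentStrip K J) (hZ : IsVerticalFamily S ρ Z)
    (hρ : ρ ∈ J) (j : ℕ) : Moderate (Icc 0 1) S fun lam a => jumpCumulant K j lam (Z a) where
  measurable lam _ := (measurable_jumpCumulant K j lam).comp hZ.measurable
  continuousOn a _ _ hlam :=
    (hJ.hasDerivWithinAt_jumpCumulant hlam (hZ.re_eq a ▸ hρ) j).continuousWithinAt
  polyGrowthOn := by
    set C := ∫ x, |x| ^ (j + 2) * (1 + Real.exp (ρ * x)) ∂K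
    have hC : PolyGrowthOn (Icc 0 1) S fun _ a => Z a ^ (j + 2) * (C : ℂ) :=
      (hZ.polyGrowthOn.pow (j + 2)).mul (.of_bounded fun _ _ _ _ => le_rfl)
    refine hC.mono_norm fun lam hlam a _ => ?_
    refine (hJ.norm_jumpCumulant_le hlam (hZ.re_eq a ▸ hρ) j).trans ?_
    rw [hZ.re_eq, norm_mul, norm_pow, Complex.norm_real]
    gcongr
    exact Real.le_norm_self C

theorem moderateContDiff_jumpCumulant (hJ : IsExpMomentStrip K J) (hZ : IsVerticalFamily S ρ Z)
    (hρ : ρ ∈ J) (n j : ℕ) :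
    ModerateContDiff (Icc 0 1) S n fun lam a => jumpCumulant K j lam (Z a) := by
  induction n generalizing j with
  | zero => exact hJ.moderate_jumpCumulant hZ hρ j
  | succ n ih =>
    exact ⟨hJ.moderate_jumpCumulant hZ hρ j, _, ih (j + 1),
      fun a _ _ hlam => hJ.hasDerivWithinAt_jumpCumulant hlam (hZ.re_eq a ▸ hρ) j⟩

theorem moderateContDiff_kappa (hJ : IsExpMomentStrip K J) (hZ : IsVerticalFamily S ρ Z)
    (hρ : ρ ∈ J) (μ c : ℝ) (n : ℕ) :
    ModerateContDiff (Icc 0 1) S n fun lam a => kappa μ c K lam (Z a) := by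
  have hZ' : ModerateContDiff (Icc 0 1) S n fun _ => Z :=
    .of_const_left hZ.measurable hZ.polyGrowthOn
  refine (((hZ'.const_mul μ).add ((hZ'.mul hZ').const_mul (c / 2))).add
    (hJ.moderateContDiff_jumpCumulant hZ hρ n 0)).congr fun lam hlam a => ?_
  rw [hJ.kappa_eq_add_jumpCumulant μ c hlam (hZ.re_eq a ▸ hρ)]
  ring

theorem moderateContDiff_kbar (hJ : IsExpMomentStrip K J) (hY : IsVerticalFamily S ρ Y)
    (hZ : IsVerticalFamily S τ Z) (hρ : ρ ∈ J) (hτ : τ ∈ J) (hρτ : ρ + τ ∈ J) (μ c : ℝ) (n : ℕ) :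
    ModerateContDiff (Icc 0 1) S n fun lam a => kbar μ c K lam (Y a) (Z a) :=
  ((hJ.moderateContDiff_kappa (hY.add hZ) hρτ μ c n).sub
    (hJ.moderateContDiff_kappa hY hρ μ c n)).sub (hJ.moderateContDiff_kappa hZ hτ μ c n)

end IsExpMomentStrip

end VerticalFamily

section KappaConj

variable (μ c : ℝ) (K : Measure ℝ) (lam : ℝ)

theorem kappa_conj (z : ℂ) : kappa μ c K lam (conj z) = conj (kappa μ c K lam z) := by
  have hint : ∫ x : ℝ, (Complex.exp (lam * conj z * x) - 1 - lam * conj z * x) ∂K =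
      conj (∫ x : ℝ, (Complex.exp (lam * z * x) - 1 - lam * z * x) ∂K) := by
    rw [← integral_conj]
    simp only [map_sub, map_mul, map_one, ← Complex.exp_conj, Complex.conj_ofReal]
  unfold kappa
  split_ifs
  · simp [Complex.conj_ofNat]
  · simp [hint, Complex.conj_ofNat]

theorem ofReal_re_kappa_ofReal (r : ℝ) : ((kappa μ c K lam r).re : ℂ) = kappa μ c K lam r :=
  Complex.conj_eq_iff_re.mp (by rw [← kappa_conj, Complex.conj_ofReal])

theorem ofReal_re_kbar_one_one : ((kbar μ c K lam 1 1).re : ℂ) = kbar μ c K lam 1 1 :=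
  Complex.conj_eq_iff_re.mp (by simp only [kbar, map_sub, ← kappa_conj, map_add, map_one])

theorem re_kbar_conj_self (z : ℂ) : (kbar μ c K lam z (conj z)).re =
    (kappa μ c K lam (2 * z.re : ℝ)).re - 2 * (kappa μ c K lam z).re := by
  rw [kbar, Complex.add_conj, kappa_conj, Complex.sub_re, Complex.sub_re, Complex.conj_re]
  ring

end KappaConj

section KbarCovariance

variable {K : Measure ℝ} {J : Set ℝ} {lam : ℝ} {y z : ℂ}

/-- The function `(exp (λ w) - 1) / λ`, extended by its limit `w` to `λ = 0`. -/
noncomputable def expDiffQuot (lam : ℝ) (w : ℂ) : ℂ :=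
  if lam = 0 then w else (Complex.exp (lam * w) - 1) / lam

theorem expDiffQuot_conj (lam : ℝ) (w : ℂ) :
    expDiffQuot lam (conj w) = conj (expDiffQuot lam w) := by
  unfold expDiffQuot
  split_ifs
  · rfl
  · simp [← Complex.exp_conj]

theorem expDiffQuot_ofReal_eq_zero {x : ℝ} : expDiffQuot lam x = 0 ↔ x = 0 := by
  unfold expDiffQuot
  split_ifs with h
  · exact Complex.ofReal_eq_zero
  · have hlam : (lam : ℂ) ≠ 0 := Complex.ofReal_ne_zero.mpr h
    rw [div_eq_zero_iff, or_iff_left hlam, sub_eq_zero, ← Complex.ofReal_mul, ← Complex.ofReal_exp,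
      Complex.ofReal_eq_one, Real.exp_eq_one_iff, mul_eq_zero, or_iff_right h]

theorem expDiffQuot_mul_expDiffQuot (hlam : lam ≠ 0) (y z : ℂ) (x : ℝ) :
    expDiffQuot lam (y * x) * expDiffQuot lam (z * x) = ((lam : ℂ) ^ 2)⁻¹ *
      ((Complex.exp (lam * (y + z) * x) - 1 - lam * (y + z) * x) -
        (Complex.exp (lam * y * x) - 1 - lam * y * x) -
        (Complex.exp (lam * z * x) - 1 - lam * z * x)) := by
  have hlam' : (lam : ℂ) ≠ 0 := Complex.ofReal_ne_zero.mpr hlam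
  have hexp : Complex.exp (lam * (y + z) * x) =
      Complex.exp (lam * y * x) * Complex.exp (lam * z * x) := by
    rw [← Complex.exp_add]
    ring_nf
  rw [expDiffQuot, expDiffQuot, if_neg hlam, if_neg hlam, hexp, ← mul_assoc, ← mul_assoc]
  field_simp
  ring

namespace IsExpMomentStrip

theorem half_mem (hJ : IsExpMomentStrip K J) {r : ℝ} (hr : 2 * r ∈ J) : r ∈ J := by
  have h := hJ.convex.midpoint_mem hJ.zero_mem hr
  rwa [midpoint_eq_smul_add, zero_add, smul_eq_mul, invOf_mul_cancel_left] at h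

theorem half_add_mem (hJ : IsExpMomentStrip K J) {r t : ℝ} (hr : 2 * r ∈ J) (ht : 2 * t ∈ J) :
    r + t ∈ J := by
  have h := hJ.convex.midpoint_mem hr ht
  rwa [midpoint_eq_smul_add, smul_eq_mul, ← mul_add, invOf_mul_cancel_left] at h

theorem integrable_sq_mul (hJ : IsExpMomentStrip K J) (y z : ℂ) :
    Integrable (fun x : ℝ => y * x * (z * x)) K := by
  have hsq : Integrable (fun x : ℝ => ((x ^ 2 : ℝ) : ℂ)) K := hJ.integrable_sq.ofReal
  refine (hsq.const_mul (y * z)).congr (.of_forall fun x => ?_)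
  push_cast
  ring

theorem integrable_expDiffQuot_mul (hJ : IsExpMomentStrip K J) (hlam : lam ∈ Icc (0 : ℝ) 1)
    (hy : y.re ∈ J) (hz : z.re ∈ J) (hyz : y.re + z.re ∈ J) :
    Integrable (fun x : ℝ => expDiffQuot lam (y * x) * expDiffQuot lam (z * x)) K := by
  by_cases h : lam = 0
  · simpa only [expDiffQuot, if_pos h] using hJ.integrable_sq_mul y z
  · simp only [expDiffQuot_mul_expDiffQuot h]
    exact (((hJ.integrable_exp_sub_one_sub hlam hyz).sub
      (hJ.integrable_exp_sub_one_sub hlam hy)).sub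
      (hJ.integrable_exp_sub_one_sub hlam hz)).const_mul _

theorem kbar_eq_integral (hJ : IsExpMomentStrip K J) (μ c : ℝ) (hlam : lam ∈ Icc (0 : ℝ) 1)
    (hy : y.re ∈ J) (hz : z.re ∈ J) (hyz : y.re + z.re ∈ J) : kbar μ c K lam y z =
      c * y * z + ∫ x : ℝ, expDiffQuot lam (y * x) * expDiffQuot lam (z * x) ∂K := by
  by_cases h : lam = 0
  · have hsq (x : ℝ) : expDiffQuot lam (y * x) * expDiffQuot lam (z * x) =
        y * z * ((x ^ 2 : ℝ) : ℂ) := by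
      rw [expDiffQuot, expDiffQuot, if_pos h, if_pos h]
      push_cast
      ring
    simp only [hsq, kbar, kappa, if_pos h]
    rw [integral_const_mul, integral_complex_ofReal]
    push_cast
    ring
  · have hint_y := hJ.integrable_exp_sub_one_sub hlam hy
    have hint_z := hJ.integrable_exp_sub_one_sub hlam hz
    have hint_yz := hJ.integrable_exp_sub_one_sub (z := y + z) hlam hyz
    simp only [expDiffQuot_mul_expDiffQuot h, kbar, kappa, if_neg h]
    rw [integral_const_mul, integral_sub (hint_yz.sub' hint_y) hint_z,
      integral_sub hint_yz hint_y]
    ring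

theorem re_kbar_eq_integral (hJ : IsExpMomentStrip K J) (μ c : ℝ) (hlam : lam ∈ Icc (0 : ℝ) 1)
    (hy : y.re ∈ J) (hz : z.re ∈ J) (hyz : y.re + z.re ∈ J) : (kbar μ c K lam y z).re =
      c * (y * z).re + ∫ x : ℝ, (expDiffQuot lam (y * x) * expDiffQuot lam (z * x)).re ∂K := by
  rw [hJ.kbar_eq_integral μ c hlam hy hz hyz, Complex.add_re, mul_assoc, Complex.re_ofReal_mul]
  exact congrArg _ (integral_re (hJ.integrable_expDiffQuot_mul hlam hy hz hyz)).symm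

/-- Positive semidefiniteness of `kbar` as a form in `(y, conj z)`: the left-hand side is the
`K`-integral of `‖e (y x) + ξ conj (e (z x))‖ ^ 2` for `e = expDiffQuot lam`, plus a diffusion
part. -/
theorem re_kbar_quadratic_nonneg (hJ : IsExpMomentStrip K J) (μ : ℝ) {c : ℝ} (hc : 0 ≤ c)
    (hlam : lam ∈ Icc (0 : ℝ) 1) (hy : 2 * y.re ∈ J) (hz : 2 * z.re ∈ J) (ξ : ℝ) :
    0 ≤ (kbar μ c K lam y (conj y)).re + 2 * ξ * (kbar μ c K lam y z).re +
      ξ ^ 2 * (kbar μ c K lam z (conj z)).re := by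
  have hsq (A B : ℂ) : (A * conj A).re + 2 * ξ * (A * B).re + ξ ^ 2 * (B * conj B).re =
      Complex.normSq (A + ξ * conj B) := by
    simp only [Complex.normSq_apply, Complex.add_re, Complex.add_im, Complex.mul_re,
      Complex.mul_im, Complex.conj_re, Complex.conj_im, Complex.ofReal_re, Complex.ofReal_im]
    ring
  have hint {w w' : ℂ} (hw : 2 * w.re ∈ J) (hw' : 2 * w'.re ∈ J) :
      Integrable (fun x : ℝ => (expDiffQuot lam (w * x) * expDiffQuot lam (w' * x)).re) K :=
    (hJ.integrable_expDiffQuot_mul hlam (hJ.half_mem hw) (hJ.half_mem hw')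
      (hJ.half_add_mem hw hw')).re
  have hform {w w' : ℂ} (hw : 2 * w.re ∈ J) (hw' : 2 * w'.re ∈ J) :=
    hJ.re_kbar_eq_integral μ c hlam (hJ.half_mem hw) (hJ.half_mem hw') (hJ.half_add_mem hw hw')
  have hconj (w : ℂ) (x : ℝ) : expDiffQuot lam (conj w * x) = conj (expDiffQuot lam (w * x)) := by
    rw [← expDiffQuot_conj, map_mul, Complex.conj_ofReal]
  have hsum : (kbar μ c K lam y (conj y)).re + 2 * ξ * (kbar μ c K lam y z).re +
      ξ ^ 2 * (kbar μ c K lam z (conj z)).re = c * Complex.normSq (y + ξ * conj z) +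
        ∫ x : ℝ, Complex.normSq
          (expDiffQuot lam (y * x) + ξ * conj (expDiffQuot lam (z * x))) ∂K := by
    have hyy := hint (w := y) (w' := conj y) hy hy
    have hzz := hint (w := z) (w' := conj z) hz hz
    have hyz := hint hy hz
    rw [hform (w' := conj y) hy hy, hform hy hz, hform (w' := conj z) hz hz]
    simp only [hconj] at hyy hzz ⊢
    simp only [← hsq]
    rw [integral_add (hyy.fun_add (hyz.const_mul _)) (hzz.const_mul _),
      integral_add hyy (hyz.const_mul _), integral_const_mul, integral_const_mul]
    ring
  rw [hsum]
  exact add_nonneg (mul_nonneg hc (Complex.normSq_nonneg _))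
    (integral_nonneg fun x => Complex.normSq_nonneg _)

theorem re_kappa_le_re_kappa_re (hJ : IsExpMomentStrip K J) (μ : ℝ) {c : ℝ} (hc : 0 ≤ c)
    (hlam : lam ∈ Icc (0 : ℝ) 1) (hz : z.re ∈ J) :
    (kappa μ c K lam z).re ≤ (kappa μ c K lam z.re).re := by
  have hhalf : 2 * (z / 2).re = z.re := by simp; ring
  have h := hJ.re_kbar_quadratic_nonneg μ hc hlam (y := z / 2) (z := z / 2) (hhalf ▸ hz)
    (hhalf ▸ hz) (-1)
  rw [re_kbar_conj_self, hhalf, kbar, add_halves, Complex.sub_re, Complex.sub_re] at h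
  linarith

theorem re_kbar_one_one_pos (hJ : IsExpMomentStrip K J) (μ : ℝ) {c : ℝ} (hc : 0 ≤ c)
    (hvar : 0 < c + ∫ x, x ^ 2 ∂K) (hlam : lam ∈ Icc (0 : ℝ) 1) (h2 : (2 : ℝ) ∈ J) :
    0 < (kbar μ c K lam 1 1).re := by
  have h1 : (1 : ℂ).re ∈ J := hJ.half_mem (by simpa using h2)
  have h11 : (1 : ℂ).re + (1 : ℂ).re ∈ J := by simpa [one_add_one_eq_two] using h2
  have hsq (x : ℝ) : (expDiffQuot lam (1 * x) * expDiffQuot lam (1 * x)).re =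
      Complex.normSq (expDiffQuot lam x) := by
    have hreal : conj (expDiffQuot lam x) = expDiffQuot lam x := by
      rw [← expDiffQuot_conj, Complex.conj_ofReal]
    rw [one_mul, ← Complex.ofReal_re (Complex.normSq _), ← Complex.mul_conj, hreal]
  have hint : Integrable (fun x : ℝ => Complex.normSq (expDiffQuot lam x)) K :=
    (hJ.integrable_expDiffQuot_mul hlam h1 h1 h11).re.congr (.of_forall hsq)
  have hnonneg : 0 ≤ ∫ x : ℝ, Complex.normSq (expDiffQuot lam x) ∂K :=
    integral_nonneg fun x => Complex.normSq_nonneg _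
  rw [hJ.re_kbar_eq_integral μ c hlam h1 h1 h11, mul_one, Complex.one_re, mul_one]
  simp only [hsq]
  refine (add_nonneg hc hnonneg).lt_of_ne' fun hzero => hvar.ne' ?_
  obtain ⟨hc0, hint0⟩ := (add_eq_zero_iff_of_nonneg hc hnonneg).mp hzero
  have hsq0 : (fun x : ℝ => x ^ 2) =ᵐ[K] 0 := by
    filter_upwards [(integral_eq_zero_iff_of_nonneg (fun x => Complex.normSq_nonneg _) hint).mp
      hint0] with x hx
    have hx0 : x = 0 := expDiffQuot_ofReal_eq_zero.mp (Complex.normSq_eq_zero.mp hx)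
    rw [hx0, Pi.zero_apply, zero_pow two_ne_zero]
  rw [hc0, integral_congr_ae hsq0]
  simp

end IsExpMomentStrip

end KbarCovariance

section HedgeIntegrand

/-- The exponent of the integrand `J₁(λ; t, y, z)`. -/
noncomputable def hedgeExponent (μ c : ℝ) (K : Measure ℝ) (T lam : ℝ) (y z : ℂ) (t : ℝ) : ℂ :=
  kappa μ c K lam (y + z) * t +
    (etaLK μ c K lam y + etaLK μ c K lam z - kappa μ c K lam 1 ^ 2 / kbar μ c K lam 1 1) * (T - t)

/-- The numerator of `kbar y z - kbar y 1 * kbar z 1 / kbar 1 1`. It carries the second-order zero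
of `J₁` at `λ = 0`. -/
noncomputable def hedgeGram (μ c : ℝ) (K : Measure ℝ) (lam : ℝ) (y z : ℂ) : ℂ :=
  kbar μ c K lam y z * kbar μ c K lam 1 1 - kbar μ c K lam y 1 * kbar μ c K lam z 1

/-- The cofactor of `hedgeGram` in `J₁(λ; t, y, z)`. -/
noncomputable def hedgeWeight (μ c : ℝ) (K : Measure ℝ) (S₀ T lam : ℝ) (y z : ℂ) (t : ℝ) : ℂ :=
  cpowR S₀ (y + z) * (kbar μ c K lam 1 1)⁻¹ * Complex.exp (hedgeExponent μ c K T lam y z t)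

variable {μ c S₀ T lam : ℝ} {K : Measure ℝ} {J : Set ℝ}

namespace IsExpMomentStrip

theorem two_mul_re_etaLK_le (hJ : IsExpMomentStrip K J) (hc : 0 ≤ c)
    (hvar : 0 < c + ∫ x, x ^ 2 ∂K) (h2 : (2 : ℝ) ∈ J) (hlam : lam ∈ Icc (0 : ℝ) 1) {z : ℂ}
    (hz : 2 * z.re ∈ J) :
    2 * (etaLK μ c K lam z).re ≤ (kappa μ c K lam (2 * z.re : ℝ)).re +
      (kappa μ c K lam 1 ^ 2 / kbar μ c K lam 1 1).re := by
  obtain ⟨k, hk⟩ : ∃ k : ℝ, kappa μ c K lam 1 = k :=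
    ⟨_, by simpa using (ofReal_re_kappa_ofReal μ c K lam 1).symm⟩
  obtain ⟨q, hq⟩ : ∃ q : ℝ, kbar μ c K lam 1 1 = q := ⟨_, (ofReal_re_kbar_one_one μ c K lam).symm⟩
  have hq0 : q ≠ 0 := by
    have := hJ.re_kbar_one_one_pos μ hc hvar hlam h2
    rw [hq, Complex.ofReal_re] at this
    exact this.ne'
  have hnonneg := hJ.re_kbar_quadratic_nonneg μ hc hlam hz (z := 1) (by simpa using h2) (k / q)
  rw [re_kbar_conj_self, map_one, hq, Complex.ofReal_re] at hnonneg
  have heta : (etaLK μ c K lam z).re =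
      (kappa μ c K lam z).re - k / q * (kbar μ c K lam z 1).re := by
    rw [etaLK, gamLK, hk, hq, mul_div_left_comm, ← Complex.ofReal_div, Complex.sub_re,
      Complex.re_mul_ofReal, mul_comm]
  have hsq : (k / q) ^ 2 * q = k ^ 2 / q := by field_simp
  rw [hk, hq, ← Complex.ofReal_pow, ← Complex.ofReal_div, Complex.ofReal_re, heta, ← hsq]
  linarith

theorem re_hedgeExponent_le (hJ : IsExpMomentStrip K J) (hc : 0 ≤ c)
    (hvar : 0 < c + ∫ x, x ^ 2 ∂K) (h2 : (2 : ℝ) ∈ J) (hlam : lam ∈ Icc (0 : ℝ) 1) {y z : ℂ}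
    {ρ t : ℝ} (hy : y.re = ρ) (hz : z.re = ρ) (hρ : 2 * ρ ∈ J) (ht : t ∈ Icc 0 T) :
    (hedgeExponent μ c K T lam y z t).re ≤ (kappa μ c K lam (2 * ρ : ℝ)).re * T := by
  have hsum : (kappa μ c K lam (y + z)).re ≤ (kappa μ c K lam (2 * ρ : ℝ)).re := by
    have hre : (y + z).re = 2 * ρ := by rw [Complex.add_re, hy, hz, two_mul]
    simpa only [hre] using hJ.re_kappa_le_re_kappa_re μ hc hlam (z := y + z) (hre ▸ hρ)
  have heta_y := hJ.two_mul_re_etaLK_le (μ := μ) hc hvar h2 hlam (z := y) (hy ▸ hρ)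
  have heta_z := hJ.two_mul_re_etaLK_le (μ := μ) hc hvar h2 hlam (z := z) (hz ▸ hρ)
  rw [hy] at heta_y
  rw [hz] at heta_z
  rw [hedgeExponent, ← Complex.ofReal_sub, Complex.add_re, Complex.re_mul_ofReal,
    Complex.re_mul_ofReal, Complex.sub_re, Complex.add_re]
  calc _ ≤ (kappa μ c K lam (2 * ρ : ℝ)).re * t + (kappa μ c K lam (2 * ρ : ℝ)).re * (T - t) := by
        gcongr
        · exact ht.1
        · exact sub_nonneg.mpr ht.2
        · linarith
    _ = (kappa μ c K lam (2 * ρ : ℝ)).re * T := by ring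

variable [SFinite K] {α : Type*} [SeminormedAddGroup α] {S : Set α}
  {Y Z : α → ℂ} {ρ : ℝ} {τ : α → ℝ}

theorem continuousOn_kappa (hJ : IsExpMomentStrip K J) {z : ℂ} (hz : z.re ∈ J) :
    ContinuousOn (fun lam => kappa μ c K lam z) (Icc 0 1) :=
  fun _ hlam => (hJ.hasDerivWithinAt_kappa μ c hlam hz).continuousWithinAt

theorem polyGrowthOn_exp_hedgeExponent (hJ : IsExpMomentStrip K J) (hc : 0 ≤ c)
    (hvar : 0 < c + ∫ x, x ^ 2 ∂K) (h2 : (2 : ℝ) ∈ J) (hY : ∀ a, (Y a).re = ρ)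
    (hZ : ∀ a, (Z a).re = ρ) (hρ : 2 * ρ ∈ J) (hτ : ∀ a ∈ S, τ a ∈ Icc 0 T) :
    PolyGrowthOn (Icc 0 1) S
      fun lam a => Complex.exp (hedgeExponent μ c K T lam (Y a) (Z a) (τ a)) := by
  have hcont : ContinuousOn (fun lam => Complex.exp (kappa μ c K lam (2 * ρ : ℝ) * T)) (Icc 0 1) :=
    ((hJ.continuousOn_kappa hρ).mul continuousOn_const).cexp
  refine (PolyGrowthOn.of_continuousOn isCompact_Icc hcont).mono_norm fun lam hlam a ha => ?_
  rw [Complex.norm_exp, Complex.norm_exp, Complex.re_mul_ofReal]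
  exact Real.exp_le_exp.mpr
    (hJ.re_hedgeExponent_le hc hvar h2 hlam (hY a) (hZ a) hρ (hτ a ha))

variable [MeasurableSpace α]

theorem moderateContDiff_inv_kbar_one_one (hJ : IsExpMomentStrip K J) (hc : 0 ≤ c)
    (hvar : 0 < c + ∫ x, x ^ 2 ∂K) (h2 : (2 : ℝ) ∈ J) (n : ℕ) :
    ModerateContDiff (Icc 0 1) S n fun lam _ => (kbar μ c K lam 1 1)⁻¹ := by
  have h1 : (1 : ℂ).re ∈ J := hJ.half_mem (by simpa using h2)
  have h11 : (1 : ℂ).re + (1 : ℂ).re ∈ J := by simpa [one_add_one_eq_two] using h2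
  have hne (lam : ℝ) (hlam : lam ∈ Icc (0 : ℝ) 1) : kbar μ c K lam 1 1 ≠ 0 := fun h =>
    (hJ.re_kbar_one_one_pos μ hc hvar hlam h2).ne' (by rw [h, Complex.zero_re])
  have hcont : ContinuousOn (fun lam => kbar μ c K lam 1 1) (Icc 0 1) :=
    ((hJ.continuousOn_kappa h11).sub (hJ.continuousOn_kappa h1)).sub (hJ.continuousOn_kappa h1)
  exact (hJ.moderateContDiff_kbar (.const 1) (.const 1) h1 h1 h11 μ c n).inv
    (fun lam hlam _ _ => hne lam hlam) (.of_continuousOn isCompact_Icc (hcont.inv₀ hne))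

theorem moderateContDiff_hedgeGram (hJ : IsExpMomentStrip K J) (h2 : (2 : ℝ) ∈ J)
    (hY : IsVerticalFamily S ρ Y) (hZ : IsVerticalFamily S ρ Z) (hρ : 2 * ρ ∈ J) (n : ℕ) :
    ModerateContDiff (Icc 0 1) S n fun lam a => hedgeGram μ c K lam (Y a) (Z a) := by
  have h1 : 2 * (1 : ℂ).re ∈ J := by simpa using h2
  have hkbar {W W' : α → ℂ} {r r' : ℝ} (hW : IsVerticalFamily S r W)
      (hW' : IsVerticalFamily S r' W') (hr : 2 * r ∈ J) (hr' : 2 * r' ∈ J) :=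
    hJ.moderateContDiff_kbar hW hW' (hJ.half_mem hr) (hJ.half_mem hr') (hJ.half_add_mem hr hr')
      μ c n
  exact ((hkbar hY hZ hρ hρ).mul (hkbar (.const 1) (.const 1) h1 h1)).sub
    ((hkbar hY (.const 1) hρ h1).mul (hkbar hZ (.const 1) hρ h1))

theorem moderateContDiff_etaLK (hJ : IsExpMomentStrip K J) (hc : 0 ≤ c)
    (hvar : 0 < c + ∫ x, x ^ 2 ∂K) (h2 : (2 : ℝ) ∈ J) (hZ : IsVerticalFamily S ρ Z)
    (hρ : 2 * ρ ∈ J) (n : ℕ) :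
    ModerateContDiff (Icc 0 1) S n fun lam a => etaLK μ c K lam (Z a) := by
  have h1 : 2 * (1 : ℂ).re ∈ J := by simpa using h2
  simp only [etaLK, gamLK, div_eq_mul_inv]
  exact (hJ.moderateContDiff_kappa hZ (hJ.half_mem hρ) μ c n).sub
    ((hJ.moderateContDiff_kappa (.const 1) (hJ.half_mem h1) μ c n).mul
      ((hJ.moderateContDiff_kbar hZ (.const 1) (hJ.half_mem hρ) (hJ.half_mem h1)
        (hJ.half_add_mem hρ h1) μ c n).mul (hJ.moderateContDiff_inv_kbar_one_one hc hvar h2 n)))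

theorem moderateContDiff_hedgeExponent (hJ : IsExpMomentStrip K J) (hc : 0 ≤ c)
    (hvar : 0 < c + ∫ x, x ^ 2 ∂K) (h2 : (2 : ℝ) ∈ J) (hY : IsVerticalFamily S ρ Y)
    (hZ : IsVerticalFamily S ρ Z) (hρ : 2 * ρ ∈ J) (hτm : Measurable τ)
    (hτ : ∀ a ∈ S, τ a ∈ Icc 0 T) (n : ℕ) :
    ModerateContDiff (Icc 0 1) S n
      fun lam a => hedgeExponent μ c K T lam (Y a) (Z a) (τ a) := by
  have h1 : 2 * (1 : ℂ).re ∈ J := by simpa using h2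
  have hone := hJ.moderateContDiff_kappa (S := S) (.const 1) (hJ.half_mem h1) μ c n
  have htime : ModerateContDiff (Icc 0 1) S n fun _ a => (τ a : ℂ) := by
    refine .of_const_left (by fun_prop) (.of_bounded (C := T) fun _ _ a ha => ?_)
    rw [Complex.norm_real, Real.norm_of_nonneg (hτ a ha).1]
    exact (hτ a ha).2
  simp only [hedgeExponent, sq, div_eq_mul_inv]
  exact ((hJ.moderateContDiff_kappa (hY.add hZ) (two_mul ρ ▸ hρ) μ c n).mul htime).add
    ((((hJ.moderateContDiff_etaLK hc hvar h2 hY hρ n).add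
      (hJ.moderateContDiff_etaLK hc hvar h2 hZ hρ n)).sub
      ((hone.mul hone).mul (hJ.moderateContDiff_inv_kbar_one_one hc hvar h2 n))).mul
      ((ModerateContDiff.const (T : ℂ)).sub htime))

theorem moderateContDiff_hedgeWeight (hJ : IsExpMomentStrip K J) (hc : 0 ≤ c)
    (hvar : 0 < c + ∫ x, x ^ 2 ∂K) (h2 : (2 : ℝ) ∈ J) (hY : IsVerticalFamily S ρ Y)
    (hZ : IsVerticalFamily S ρ Z) (hρ : 2 * ρ ∈ J) (hτm : Measurable τ)
    (hτ : ∀ a ∈ S, τ a ∈ Icc 0 T) (n : ℕ) :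
    ModerateContDiff (Icc 0 1) S n
      fun lam a => hedgeWeight μ c K S₀ T lam (Y a) (Z a) (τ a) := by
  have hpow : ModerateContDiff (Icc 0 1) S n fun _ a => cpowR S₀ (Y a + Z a) := by
    refine .of_const_left ((hY.add hZ).measurable.mul_const _).cexp
      (.of_bounded (C := Real.exp ((ρ + ρ) * Real.log S₀)) fun _ _ a _ => Eq.le ?_)
    rw [cpowR, Complex.norm_exp, Complex.re_mul_ofReal, (hY.add hZ).re_eq]
  exact (hpow.mul (hJ.moderateContDiff_inv_kbar_one_one hc hvar h2 n)).mul
    ((hJ.moderateContDiff_hedgeExponent hc hvar h2 hY hZ hρ hτm hτ n).exp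
      (hJ.polyGrowthOn_exp_hedgeExponent hc hvar h2 hY.re_eq hZ.re_eq hρ hτ))

end IsExpMomentStrip

end HedgeIntegrand

section HedgeGramExpansion

variable {μ c lam : ℝ} {K : Measure ℝ} {J : Set ℝ}

theorem kappa_zero (μ c : ℝ) (K : Measure ℝ) (z : ℂ) :
    kappa μ c K 0 z = μ * z + ((c + ∫ x, x ^ 2 ∂K : ℝ) : ℂ) / 2 * z ^ 2 :=
  if_pos rfl

theorem kbar_zero (μ c : ℝ) (K : Measure ℝ) (y z : ℂ) :
    kbar μ c K 0 y z = ((c + ∫ x, x ^ 2 ∂K : ℝ) : ℂ) * (y * z) := by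
  rw [kbar, kappa_zero, kappa_zero, kappa_zero]
  ring

theorem hedgeGram_zero (μ c : ℝ) (K : Measure ℝ) (y z : ℂ) : hedgeGram μ c K 0 y z = 0 := by
  simp only [hedgeGram, kbar_zero]
  ring

/-- The polarization of `jumpCumulant` in the sense of `kbar`; for `1 ≤ j` it is the `j`-th
derivative of `kbar` in `λ`. -/
noncomputable def jumpKbar (K : Measure ℝ) (j : ℕ) (lam : ℝ) (y z : ℂ) : ℂ :=
  jumpCumulant K j lam (y + z) - jumpCumulant K j lam y - jumpCumulant K j lam z

theorem jumpKbar_zero [SFinite K] (j : ℕ) (y z : ℂ) : jumpKbar K j 0 y z =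
    ((y + z) ^ (j + 2) - y ^ (j + 2) - z ^ (j + 2)) * (∫ x, x ^ (j + 2) ∂K : ℝ) /
      ((j + 1) * (j + 2)) := by
  rw [jumpKbar, jumpCumulant_zero, jumpCumulant_zero, jumpCumulant_zero]
  ring

namespace IsExpMomentStrip

variable {y z : ℂ}

theorem hasDerivWithinAt_jumpKbar (hJ : IsExpMomentStrip K J) (hlam : lam ∈ Icc (0 : ℝ) 1)
    (hy : 2 * y.re ∈ J) (hz : 2 * z.re ∈ J) (j : ℕ) :
    HasDerivWithinAt (fun lam => jumpKbar K j lam y z) (jumpKbar K (j + 1) lam y z)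
      (Icc 0 1) lam :=
  ((hJ.hasDerivWithinAt_jumpCumulant hlam (hJ.half_add_mem hy hz) j).sub
    (hJ.hasDerivWithinAt_jumpCumulant hlam (hJ.half_mem hy) j)).sub
    (hJ.hasDerivWithinAt_jumpCumulant hlam (hJ.half_mem hz) j)

variable [SFinite K]

theorem hasDerivWithinAt_kbar (hJ : IsExpMomentStrip K J) (μ c : ℝ) (hlam : lam ∈ Icc (0 : ℝ) 1)
    (hy : 2 * y.re ∈ J) (hz : 2 * z.re ∈ J) :
    HasDerivWithinAt (fun lam => kbar μ c K lam y z) (jumpKbar K 1 lam y z) (Icc 0 1) lam :=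
  ((hJ.hasDerivWithinAt_kappa μ c hlam (hJ.half_add_mem hy hz)).sub
    (hJ.hasDerivWithinAt_kappa μ c hlam (hJ.half_mem hy))).sub
    (hJ.hasDerivWithinAt_kappa μ c hlam (hJ.half_mem hz))

theorem derivWithin_hedgeGram (hJ : IsExpMomentStrip K J) (h2 : (2 : ℝ) ∈ J)
    (hlam : lam ∈ Icc (0 : ℝ) 1) (hy : 2 * y.re ∈ J) (hz : 2 * z.re ∈ J) :
    derivWithin (fun lam => hedgeGram μ c K lam y z) (Icc 0 1) lam =
      jumpKbar K 1 lam y z * kbar μ c K lam 1 1 + kbar μ c K lam y z * jumpKbar K 1 lam 1 1 -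
        (jumpKbar K 1 lam y 1 * kbar μ c K lam z 1 +
          kbar μ c K lam y 1 * jumpKbar K 1 lam z 1) := by
  have h1 : 2 * (1 : ℂ).re ∈ J := by simpa using h2
  exact (((hJ.hasDerivWithinAt_kbar μ c hlam hy hz).mul
    (hJ.hasDerivWithinAt_kbar μ c hlam h1 h1)).sub ((hJ.hasDerivWithinAt_kbar μ c hlam hy h1).mul
    (hJ.hasDerivWithinAt_kbar μ c hlam hz h1))).derivWithin (uniqueDiffOn_Icc_zero_one lam hlam)

theorem iteratedDerivWithin_one_hedgeGram_zero (hJ : IsExpMomentStrip K J) (h2 : (2 : ℝ) ∈ J)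
    (hy : 2 * y.re ∈ J) (hz : 2 * z.re ∈ J) :
    iteratedDerivWithin 1 (fun lam => hedgeGram μ c K lam y z) (Icc 0 1) 0 = 0 := by
  rw [iteratedDerivWithin_one,
    hJ.derivWithin_hedgeGram h2 (left_mem_Icc.mpr zero_le_one) hy hz]
  simp only [kbar_zero, jumpKbar_zero]
  push_cast
  ring

theorem iteratedDerivWithin_two_hedgeGram_zero (hJ : IsExpMomentStrip K J) (h2 : (2 : ℝ) ∈ J)
    (hy : 2 * y.re ∈ J) (hz : 2 * z.re ∈ J) :
    iteratedDerivWithin 2 (fun lam => hedgeGram μ c K lam y z) (Icc 0 1) 0 =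
      (((c + ∫ x, x ^ 2 ∂K) * ∫ x, x ^ 4 ∂K) - (∫ x, x ^ 3 ∂K) ^ 2 : ℝ) / 2 *
        (y * (y - 1) * (z * (z - 1))) := by
  have h1 : 2 * (1 : ℂ).re ∈ J := by simpa using h2
  have h0 : (0 : ℝ) ∈ Icc (0 : ℝ) 1 := left_mem_Icc.mpr zero_le_one
  have hderiv {w w' : ℂ} (hw : 2 * w.re ∈ J) (hw' : 2 * w'.re ∈ J) :=
    hJ.hasDerivWithinAt_kbar μ c h0 hw hw'
  have hderiv' {w w' : ℂ} (hw : 2 * w.re ∈ J) (hw' : 2 * w'.re ∈ J) :=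
    hJ.hasDerivWithinAt_jumpKbar h0 hw hw' 1
  rw [iteratedDerivWithin_succ', iteratedDerivWithin_one,
    derivWithin_congr (fun _ hlam => hJ.derivWithin_hedgeGram h2 hlam hy hz)
      (hJ.derivWithin_hedgeGram h2 h0 hy hz)]
  refine ((((hderiv' hy hz).mul (hderiv h1 h1)).add ((hderiv hy hz).mul (hderiv' h1 h1))).sub
    (((hderiv' hy h1).mul (hderiv hz h1)).add ((hderiv hy h1).mul (hderiv' hz h1)))).derivWithin
    (uniqueDiffOn_Icc_zero_one 0 h0) |>.trans ?_
  simp only [kbar_zero, jumpKbar_zero]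
  push_cast
  ring

end IsExpMomentStrip

end HedgeGramExpansion

section HedgeError

namespace IsExpMomentStrip

variable {μ c S₀ T ρ : ℝ} {K : Measure ℝ} [SFinite K] {J : Set ℝ} {α : Type*}
  [SeminormedAddGroup α] [MeasurableSpace α] {S : Set α} {Y Z : α → ℂ} {τ : α → ℝ}

theorem iteratedDerivWithin_hedgeGram_mul_hedgeWeight_zero (hJ : IsExpMomentStrip K J) (hc : 0 ≤ c)
    (hvar : 0 < c + ∫ x, x ^ 2 ∂K) (h2 : (2 : ℝ) ∈ J) (hY : IsVerticalFamily S ρ Y)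
    (hZ : IsVerticalFamily S ρ Z) (hρ : 2 * ρ ∈ J) (hτm : Measurable τ)
    (hτ : ∀ a ∈ S, τ a ∈ Icc 0 T) {n : ℕ} (hn : n ≤ 2) {a : α} (ha : a ∈ S) :
    iteratedDerivWithin n (fun lam => hedgeGram μ c K lam (Y a) (Z a) *
        hedgeWeight μ c K S₀ T lam (Y a) (Z a) (τ a)) (Icc 0 1) 0 =
      iteratedDerivWithin n (fun lam => hedgeGram μ c K lam (Y a) (Z a)) (Icc 0 1) 0 *
        hedgeWeight μ c K S₀ T 0 (Y a) (Z a) (τ a) := by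
  have h0 : (0 : ℝ) ∈ Icc (0 : ℝ) 1 := left_mem_Icc.mpr zero_le_one
  refine iteratedDerivWithin_mul_of_forall_lt_eq_zero h0 uniqueDiffOn_Icc_zero_one
    ((hJ.moderateContDiff_hedgeGram h2 hY hZ hρ n).contDiffOn uniqueDiffOn_Icc_zero_one ha 0 h0)
    ((hJ.moderateContDiff_hedgeWeight hc hvar h2 hY hZ hρ hτm hτ n).contDiffOn
      uniqueDiffOn_Icc_zero_one ha 0 h0) fun i hi => ?_
  obtain rfl | rfl : i = 0 ∨ i = 1 := by omega
  · rw [iteratedDerivWithin_zero, hedgeGram_zero]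
  · exact hJ.iteratedDerivWithin_one_hedgeGram_zero h2 (by rwa [hY.re_eq]) (by rwa [hZ.re_eq])

end IsExpMomentStrip

theorem zLine_re (R y : ℝ) : (zLine R y).re = R := by
  simp [zLine]

theorem measurable_zLine (R : ℝ) : Measurable (zLine R) := by
  unfold zLine
  fun_prop

theorem norm_zLine_le (R y : ℝ) : ‖zLine R y‖ ≤ (1 + |R|) * (1 + |y|) := by
  have h : ‖zLine R y‖ ≤ |R| + |y| := (norm_add_le _ _).trans_eq (by simp)
  nlinarith [abs_nonneg R, abs_nonneg y, mul_nonneg (abs_nonneg R) (abs_nonneg y)]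

theorem isVerticalFamily_zLine {α : Type*} [SeminormedAddGroup α] [MeasurableSpace α] {S : Set α}
    {g : α → ℝ} (R : ℝ) (hg : Measurable g) (hg' : ∀ a, |g a| ≤ ‖a‖) :
    IsVerticalFamily S R fun a => zLine R (g a) where
  measurable := (measurable_zLine R).comp hg
  re_eq a := zLine_re R (g a)
  polyGrowthOn := .of_norm_le (C := 1 + |R|) (N := 1) fun _ _ a _ => by
    rw [pow_one]
    refine (norm_zLine_le R (g a)).trans ?_
    gcongr
    exact hg' a

theorem isVerticalFamily_zLine_fst {S : Set ((ℝ × ℝ) × ℝ)} (R : ℝ) :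
    IsVerticalFamily S R fun a => zLine R a.1.1 :=
  isVerticalFamily_zLine R (by fun_prop) fun a => (norm_fst_le a.1).trans (norm_fst_le a)

theorem isVerticalFamily_zLine_snd {S : Set ((ℝ × ℝ) × ℝ)} (R : ℝ) :
    IsVerticalFamily S R fun a => zLine R a.1.2 :=
  isVerticalFamily_zLine R (by fun_prop) fun a => (norm_snd_le a.1).trans (norm_fst_le a)

/-- The product of two copies of the frequency line with the time interval `(0, T]`. -/
noncomputable def hedgeMeasure (T : ℝ) : Measure ((ℝ × ℝ) × ℝ) :=
  volume.prod (volume.restrict (Ioc 0 T))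

theorem ae_hedgeMeasure_snd_mem (T : ℝ) :
    ∀ᵐ a ∂hedgeMeasure T, a ∈ Prod.snd ⁻¹' Icc 0 T := by
  refine Measure.quasiMeasurePreserving_snd.ae (p := fun t => t ∈ Icc 0 T) ?_
  filter_upwards [ae_restrict_mem measurableSet_Ioc] with t ht using Ioc_subset_Icc_self ht

theorem hasPolyMoments_hedgeMeasure {p q : ℝ → ℂ} (hp : HasPolyMoments p volume)
    (hq : HasPolyMoments q volume) (T : ℝ) :
    HasPolyMoments (fun a => p a.1.1 * q a.1.2) (hedgeMeasure T) := by
  have htime : HasPolyMoments (fun _ : ℝ => (1 : ℂ)) (volume.restrict (Ioc 0 T)) := by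
    refine ⟨aestronglyMeasurable_const, fun N => ?_⟩
    have hcont : Continuous fun t : ℝ => (1 + ‖t‖) ^ N * ‖(1 : ℂ)‖ := by fun_prop
    exact (hcont.integrableOn_Icc (a := 0) (b := T)).mono_set Ioc_subset_Icc_self
  simpa only [mul_one, hedgeMeasure, Measure.volume_eq_prod] using
    (hp.mul_prod hq).mul_prod htime

section Fubini

variable {T : ℝ} {g : (ℝ × ℝ) × ℝ → ℂ}

theorem integral_hedgeMeasure (hT : 0 ≤ T) (hg : Integrable g (hedgeMeasure T)) :
    ∫ a, g a ∂hedgeMeasure T = ∫ u, ∫ v, ∫ t in (0 : ℝ)..T, g ((u, v), t) := by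
  simp only [intervalIntegral.integral_of_le hT]
  rw [hedgeMeasure, integral_prod g hg, Measure.volume_eq_prod,
    integral_prod _ (by simpa only [Measure.volume_eq_prod] using hg.integral_prod_left)]

theorem integral_hedgeMeasure_symm (hT : 0 ≤ T) (hg : Integrable g (hedgeMeasure T)) :
    ∫ a, g a ∂hedgeMeasure T = ∫ t in (0 : ℝ)..T, ∫ w, g (w, t) := by
  rw [intervalIntegral.integral_of_le hT]
  exact integral_prod_symm g hg

end Fubini

/-- `ε₁²(λ)` as a single integral over frequencies and time. -/
noncomputable def hedgeError (μ c : ℝ) (K : Measure ℝ) (R S₀ T : ℝ) (p : ℝ → ℂ) (lam : ℝ) : ℂ :=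
  ∫ a, hedgeGram μ c K lam (zLine R a.1.1) (zLine R a.1.2) *
    hedgeWeight μ c K S₀ T lam (zLine R a.1.1) (zLine R a.1.2) a.2 * (p a.1.1 * p a.1.2)
    ∂hedgeMeasure T

theorem hedgeError_zero (μ c : ℝ) (K : Measure ℝ) (R S₀ T : ℝ) (p : ℝ → ℂ) :
    hedgeError μ c K R S₀ T p 0 = 0 := by
  simp only [hedgeError, hedgeGram_zero, zero_mul, integral_zero]

namespace IsExpMomentStrip

variable {μ c S₀ T R lam : ℝ} {K : Measure ℝ} {J : Set ℝ} {p : ℝ → ℂ}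

theorem hedgeGram_mul_hedgeWeight (hJ : IsExpMomentStrip K J) (hc : 0 ≤ c)
    (hvar : 0 < c + ∫ x, x ^ 2 ∂K) (h2 : (2 : ℝ) ∈ J) (hlam : lam ∈ Icc (0 : ℝ) 1) (y z : ℂ)
    (t : ℝ) :
    hedgeGram μ c K lam y z * hedgeWeight μ c K S₀ T lam y z t =
      cpowR S₀ (y + z) *
        (kbar μ c K lam y z - kbar μ c K lam y 1 * kbar μ c K lam z 1 / kbar μ c K lam 1 1) *
        Complex.exp (hedgeExponent μ c K T lam y z t) := by
  have hne : kbar μ c K lam 1 1 ≠ 0 := fun h =>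
    (hJ.re_kbar_one_one_pos μ hc hvar hlam h2).ne' (by rw [h, Complex.zero_re])
  rw [hedgeGram, hedgeWeight]
  field_simp

variable [SFinite K]

theorem moderateContDiff_hedgeGram_mul_hedgeWeight (hJ : IsExpMomentStrip K J) (hc : 0 ≤ c)
    (hvar : 0 < c + ∫ x, x ^ 2 ∂K) (h2 : (2 : ℝ) ∈ J) (hR : 2 * R ∈ J) (n : ℕ) :
    ModerateContDiff (Icc 0 1) (Prod.snd ⁻¹' Icc 0 T) n fun lam (a : (ℝ × ℝ) × ℝ) =>
      hedgeGram μ c K lam (zLine R a.1.1) (zLine R a.1.2) *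
        hedgeWeight μ c K S₀ T lam (zLine R a.1.1) (zLine R a.1.2) a.2 :=
  (hJ.moderateContDiff_hedgeGram h2 (isVerticalFamily_zLine_fst R) (isVerticalFamily_zLine_snd R)
    hR n).mul (hJ.moderateContDiff_hedgeWeight hc hvar h2 (isVerticalFamily_zLine_fst R)
    (isVerticalFamily_zLine_snd R) hR measurable_snd (fun _ ha => ha) n)

theorem contDiffOn_hedgeError (hJ : IsExpMomentStrip K J) (hc : 0 ≤ c)
    (hvar : 0 < c + ∫ x, x ^ 2 ∂K) (h2 : (2 : ℝ) ∈ J) (hR : 2 * R ∈ J)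
    (hp : HasPolyMoments p volume) (n : ℕ) :
    ContDiffOn ℝ n (hedgeError μ c K R S₀ T p) (Icc 0 1) :=
  (hJ.moderateContDiff_hedgeGram_mul_hedgeWeight hc hvar h2 hR n).contDiffOn_integral
    (convex_Icc 0 1) uniqueDiffOn_Icc_zero_one (hasPolyMoments_hedgeMeasure hp hp T)
    (ae_hedgeMeasure_snd_mem T)

theorem hedgeError_eq_iterated_integral (hJ : IsExpMomentStrip K J) (hc : 0 ≤ c)
    (hvar : 0 < c + ∫ x, x ^ 2 ∂K) (h2 : (2 : ℝ) ∈ J) (hR : 2 * R ∈ J)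
    (hp : HasPolyMoments p volume) (hT : 0 ≤ T) (hlam : lam ∈ Icc (0 : ℝ) 1) :
    hedgeError μ c K R S₀ T p lam = ∫ u, ∫ v, ∫ t in (0 : ℝ)..T,
      cpowR S₀ (zLine R u + zLine R v) *
        (kbar μ c K lam (zLine R u) (zLine R v) -
          kbar μ c K lam (zLine R u) 1 * kbar μ c K lam (zLine R v) 1 / kbar μ c K lam 1 1) *
        Complex.exp (hedgeExponent μ c K T lam (zLine R u) (zLine R v) t) * p u * p v := by
  rw [hedgeError, integral_hedgeMeasure hT
    ((hJ.moderateContDiff_hedgeGram_mul_hedgeWeight hc hvar h2 hR 0).moderate.integrable_mul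
      (hasPolyMoments_hedgeMeasure hp hp T) (ae_hedgeMeasure_snd_mem T) hlam)]
  simp only [hJ.hedgeGram_mul_hedgeWeight hc hvar h2 hlam, mul_assoc]

theorem ae_iteratedDerivWithin_hedgeGram_mul_hedgeWeight (hJ : IsExpMomentStrip K J) (hc : 0 ≤ c)
    (hvar : 0 < c + ∫ x, x ^ 2 ∂K) (h2 : (2 : ℝ) ∈ J) (hR : 2 * R ∈ J) {n : ℕ} (hn : n ≤ 2) :
    ∀ᵐ a ∂hedgeMeasure T, iteratedDerivWithin n (fun lam =>
        hedgeGram μ c K lam (zLine R a.1.1) (zLine R a.1.2) *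
          hedgeWeight μ c K S₀ T lam (zLine R a.1.1) (zLine R a.1.2) a.2) (Icc 0 1) 0 =
      iteratedDerivWithin n (fun lam => hedgeGram μ c K lam (zLine R a.1.1) (zLine R a.1.2))
        (Icc 0 1) 0 * hedgeWeight μ c K S₀ T 0 (zLine R a.1.1) (zLine R a.1.2) a.2 := by
  filter_upwards [ae_hedgeMeasure_snd_mem T] with a ha
  exact hJ.iteratedDerivWithin_hedgeGram_mul_hedgeWeight_zero hc hvar h2
    (isVerticalFamily_zLine_fst R) (isVerticalFamily_zLine_snd R) hR measurable_snd
    (fun _ h => h) hn ha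

theorem iteratedDerivWithin_hedgeError_zero (hJ : IsExpMomentStrip K J) (hc : 0 ≤ c)
    (hvar : 0 < c + ∫ x, x ^ 2 ∂K) (h2 : (2 : ℝ) ∈ J) (hR : 2 * R ∈ J)
    (hp : HasPolyMoments p volume) {n : ℕ} (hn : n ≤ 2) :
    iteratedDerivWithin n (hedgeError μ c K R S₀ T p) (Icc 0 1) 0 =
      ∫ a, iteratedDerivWithin n (fun lam => hedgeGram μ c K lam (zLine R a.1.1) (zLine R a.1.2))
        (Icc 0 1) 0 * hedgeWeight μ c K S₀ T 0 (zLine R a.1.1) (zLine R a.1.2) a.2 *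
        (p a.1.1 * p a.1.2) ∂hedgeMeasure T := by
  refine ((hJ.moderateContDiff_hedgeGram_mul_hedgeWeight hc hvar h2 hR
    n).iteratedDerivWithin_integral (convex_Icc 0 1) uniqueDiffOn_Icc_zero_one
    (hasPolyMoments_hedgeMeasure hp hp T) (ae_hedgeMeasure_snd_mem T)
    (left_mem_Icc.mpr zero_le_one)).trans (integral_congr_ae ?_)
  filter_upwards [hJ.ae_iteratedDerivWithin_hedgeGram_mul_hedgeWeight hc hvar h2 hR hn] with a ha
  rw [ha]

theorem iteratedDerivWithin_one_hedgeError_zero (hJ : IsExpMomentStrip K J) (hc : 0 ≤ c)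
    (hvar : 0 < c + ∫ x, x ^ 2 ∂K) (h2 : (2 : ℝ) ∈ J) (hR : 2 * R ∈ J)
    (hp : HasPolyMoments p volume) :
    iteratedDerivWithin 1 (hedgeError μ c K R S₀ T p) (Icc 0 1) 0 = 0 := by
  have hline (u : ℝ) : 2 * (zLine R u).re ∈ J := by rwa [zLine_re]
  simp only [hJ.iteratedDerivWithin_hedgeError_zero hc hvar h2 hR hp one_le_two,
    hJ.iteratedDerivWithin_one_hedgeGram_zero h2 (hline _) (hline _), zero_mul, integral_zero]

theorem iteratedDerivWithin_two_hedgeError_zero (hJ : IsExpMomentStrip K J) (hc : 0 ≤ c)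
    (hvar : 0 < c + ∫ x, x ^ 2 ∂K) (h2 : (2 : ℝ) ∈ J) (hR : 2 * R ∈ J)
    (hp : HasPolyMoments p volume) (hT : 0 ≤ T) :
    iteratedDerivWithin 2 (hedgeError μ c K R S₀ T p) (Icc 0 1) 0 =
      (((c + ∫ x, x ^ 2 ∂K) * ∫ x, x ^ 4 ∂K) - (∫ x, x ^ 3 ∂K) ^ 2 : ℝ) / 2 *
        ∫ t in (0 : ℝ)..T, ∫ w : ℝ × ℝ, zLine R w.1 * (zLine R w.1 - 1) *
          (zLine R w.2 * (zLine R w.2 - 1)) *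
          hedgeWeight μ c K S₀ T 0 (zLine R w.1) (zLine R w.2) t * (p w.1 * p w.2) := by
  have hline (u : ℝ) : 2 * (zLine R u).re ∈ J := by rwa [zLine_re]
  have hint := ((hJ.moderateContDiff_hedgeGram_mul_hedgeWeight (μ := μ) (S₀ := S₀) hc hvar h2 hR
    2).integrable_iteratedDerivWithin_mul uniqueDiffOn_Icc_zero_one
    (hasPolyMoments_hedgeMeasure hp hp T) (ae_hedgeMeasure_snd_mem T)
    (left_mem_Icc.mpr zero_le_one)).congr (by
      filter_upwards [hJ.ae_iteratedDerivWithin_hedgeGram_mul_hedgeWeight hc hvar h2 hR le_rfl]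
        with a ha
      rw [ha])
  rw [hJ.iteratedDerivWithin_hedgeError_zero hc hvar h2 hR hp le_rfl,
    integral_hedgeMeasure_symm hT hint]
  simp only [hJ.iteratedDerivWithin_two_hedgeGram_zero h2 (hline _) (hline _), mul_assoc,
    integral_const_mul, intervalIntegral.integral_const_mul]

end IsExpMomentStrip

end HedgeError

section Payoff

open FourierTransform

theorem hasPolyMoments_of_forall_norm_pow_mul_le {p : ℝ → ℂ} (hp : AEStronglyMeasurable p volume)
    (h : ∀ N : ℕ, ∃ C, ∀ x, ‖x‖ ^ N * ‖p x‖ ≤ C) : HasPolyMoments p volume where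
  aestronglyMeasurable := hp
  integrable N := by
    obtain ⟨C₀, hC₀⟩ := h 0
    have hint (k : ℕ) : Integrable fun x => ‖x‖ ^ k * ‖p x‖ := by
      obtain ⟨C, hC⟩ := h (k + (volume : Measure ℝ).integrablePower)
      exact integrable_of_le_of_pow_mul_le
        (fun x => by simpa only [pow_zero, one_mul] using hC₀ x) hC hp
    refine (((hint 0).add (hint N)).const_mul (2 ^ (N - 1))).mono'
      ((Continuous.aestronglyMeasurable (by fun_prop)).mul hp.norm) (.of_forall fun x => ?_)
    rw [Real.norm_of_nonneg (by positivity)]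
    calc (1 + ‖x‖) ^ N * ‖p x‖ ≤ 2 ^ (N - 1) * (1 ^ N + ‖x‖ ^ N) * ‖p x‖ := by
          gcongr
          exact add_pow_le zero_le_one (norm_nonneg x) N
      _ = 2 ^ (N - 1) * (‖x‖ ^ 0 * ‖p x‖ + ‖x‖ ^ N * ‖p x‖) := by ring

variable {l : ℝ → ℝ}

theorem lhat_eq_fourier (l : ℝ → ℝ) (y : ℝ) :
    lhat l y = 𝓕 (fun x => (l x : ℂ)) (y / (2 * Real.pi)) := by
  rw [Real.fourier_real_eq_integral_exp_smul, lhat]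
  refine integral_congr_ae (.of_forall fun x => ?_)
  have hpi : (Real.pi : ℂ) ≠ 0 := Complex.ofReal_ne_zero.mpr Real.pi_ne_zero
  simp only [smul_eq_mul]
  rw [mul_comm]
  congr 2
  push_cast
  field_simp

theorem iteratedDeriv_ofReal_comp (hl : ContDiff ℝ (⊤ : ℕ∞) l) (n : ℕ) :
    iteratedDeriv n (fun x => (l x : ℂ)) = fun x => ((iteratedDeriv n l x : ℝ) : ℂ) := by
  ext x
  rw [iteratedDeriv_eq_iteratedFDeriv, iteratedDeriv_eq_iteratedFDeriv]
  exact congrArg (fun L => L fun _ => (1 : ℝ)) (Complex.ofRealCLM.iteratedFDeriv_comp_left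
    hl.contDiffAt (mod_cast le_top : (n : WithTop ℕ∞) ≤ (⊤ : ℕ∞)))

theorem abs_pow_mul_norm_lhat_le (hl : ContDiff ℝ (⊤ : ℕ∞) l)
    (hlint : ∀ n : ℕ, Integrable (iteratedDeriv n l)) (n : ℕ) (y : ℝ) :
    |y| ^ n * ‖lhat l y‖ ≤ ∫ x, ‖iteratedDeriv n l x‖ := by
  have hint (k : ℕ) : Integrable (iteratedDeriv k fun x => (l x : ℂ)) := by
    rw [iteratedDeriv_ofReal_comp hl]
    exact (hlint k).ofReal
  have hfourier := congrFun (Real.fourier_iteratedDeriv (N := ⊤) (n := n)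
    (Complex.ofRealCLM.contDiff.comp hl) (fun k _ => hint k) le_top) (y / (2 * Real.pi))
  have hfreq : 2 * (Real.pi : ℂ) * Complex.I * ((y / (2 * Real.pi) : ℝ) : ℂ) = y * Complex.I := by
    have hpi : (Real.pi : ℂ) ≠ 0 := Complex.ofReal_ne_zero.mpr Real.pi_ne_zero
    push_cast
    field_simp
  calc |y| ^ n * ‖lhat l y‖
      = ‖𝓕 (iteratedDeriv n fun x => (l x : ℂ)) (y / (2 * Real.pi))‖ := by
        refine Eq.trans ?_ (congrArg norm hfourier).symm
        rw [lhat_eq_fourier, norm_smul, norm_pow, hfreq, norm_mul, Complex.norm_I, mul_one,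
          Complex.norm_real, Real.norm_eq_abs]
        rfl
    _ ≤ ∫ x, ‖iteratedDeriv n (fun x => (l x : ℂ)) x‖ :=
        VectorFourier.norm_fourierIntegral_le_integral_norm _ _ _ _ _
    _ = ∫ x, ‖iteratedDeriv n l x‖ := by
        simp only [iteratedDeriv_ofReal_comp hl, Complex.norm_real]

theorem measurable_pCoef (hl : Measurable l) : Measurable (pCoef l) := by
  have h : StronglyMeasurable fun q : ℝ × ℝ =>
      (l q.2 : ℂ) * Complex.exp (-(Complex.I * (q.2 : ℂ) * (q.1 : ℂ))) :=
    Measurable.stronglyMeasurable (by fun_prop)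
  exact h.integral_prod_right.measurable.div_const _

theorem norm_pCoef_le (l : ℝ → ℝ) (y : ℝ) : ‖pCoef l y‖ ≤ ‖lhat l y‖ := by
  rw [pCoef, norm_div]
  refine div_le_self (norm_nonneg _) ?_
  rw [norm_mul, Complex.norm_real, Real.norm_of_nonneg Real.pi_pos.le, Complex.norm_ofNat]
  linarith [Real.pi_gt_three]

theorem hasPolyMoments_pCoef (hl : ContDiff ℝ (⊤ : ℕ∞) l)
    (hlint : ∀ n : ℕ, Integrable (iteratedDeriv n l)) : HasPolyMoments (pCoef l) volume :=
  hasPolyMoments_of_forall_norm_pow_mul_le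
    (measurable_pCoef hl.continuous.measurable).aestronglyMeasurable fun n =>
    ⟨∫ x, ‖iteratedDeriv n l x‖, fun y => (mul_le_mul_of_nonneg_left (norm_pCoef_le l y)
      (by positivity)).trans (abs_pow_mul_norm_lhat_le hl hlint n y)⟩

end Payoff

section GaussianSquare

theorem integral_gaussianReal_sq_integral_mul_cexp {α : Type*} [MeasurableSpace α] {ν : Measure α}
    [SFinite ν] {q Z : α → ℂ} {ρ : ℝ} (hq : Integrable q ν) (hZ : Measurable Z)
    (hρ : ∀ a, (Z a).re = ρ) (v : NNReal) :
    ∫ x : ℝ, (∫ a, q a * Complex.exp (Z a * x) ∂ν) ^ 2 ∂gaussianReal 0 v =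
      ∫ w, q w.1 * q w.2 * Complex.exp (v * (Z w.1 + Z w.2) ^ 2 / 2) ∂ν.prod ν := by
  have hsq (x : ℝ) : (∫ a, q a * Complex.exp (Z a * x) ∂ν) ^ 2 =
      ∫ w, q w.1 * q w.2 * Complex.exp ((Z w.1 + Z w.2) * x) ∂ν.prod ν := by
    rw [sq, ← integral_prod_mul]
    refine integral_congr_ae (.of_forall fun w => ?_)
    simp only [add_mul, Complex.exp_add]
    ring
  have hqq : Integrable (fun w : α × α => q w.1 * q w.2) (ν.prod ν) := hq.mul_prod hq
  have hint : Integrable (Function.uncurry fun (x : ℝ) (w : α × α) =>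
      q w.1 * q w.2 * Complex.exp ((Z w.1 + Z w.2) * x)) ((gaussianReal 0 v).prod (ν.prod ν)) := by
    refine ((integrable_exp_mul_gaussianReal (μ := 0) (v := v) (2 * ρ)).mul_prod hqq.norm).mono'
      (hqq.aestronglyMeasurable.comp_snd.mul (Measurable.aestronglyMeasurable (by fun_prop)))
      (.of_forall fun ⟨x, w⟩ => Eq.le ?_)
    rw [Function.uncurry_apply_pair, norm_mul, Complex.norm_exp, Complex.re_mul_ofReal,
      Complex.add_re, hρ, hρ, ← two_mul, mul_comm]
  have hmgf (w : α × α) : ∫ x : ℝ, Complex.exp ((Z w.1 + Z w.2) * x) ∂gaussianReal 0 v =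
      Complex.exp (v * (Z w.1 + Z w.2) ^ 2 / 2) := by
    simpa [complexMGF] using complexMGF_id_gaussianReal (μ := 0) (v := v) (Z w.1 + Z w.2)
  simp only [hsq]
  rw [integral_integral_swap hint]
  simp only [integral_const_mul, hmgf]

end GaussianSquare

section CashGreek

variable {σ2 T R S₀ : ℝ} {l : ℝ → ℝ}

/-- The Fourier density of `x ↦ D₂(t, S₀ e^{μ t + x})`. -/
noncomputable def cashGreekDensity (σ2 T R μ S₀ : ℝ) (l : ℝ → ℝ) (t y : ℝ) : ℂ :=
  zLine R y * (zLine R y - 1) * (cpowR S₀ (zLine R y) * Complex.exp (zLine R y * (μ * t)) *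
    Complex.exp (σ2 / 2 * zLine R y * (zLine R y - 1) * (T - t))) * pCoef l y

theorem cashGreek_two_mul_exp (σ2 T R μ : ℝ) (hS₀ : 0 < S₀) (l : ℝ → ℝ) (t x : ℝ) :
    cashGreek σ2 T R l 2 t (S₀ * Real.exp (μ * t + x)) =
      ∫ y, cashGreekDensity σ2 T R μ S₀ l t y * Complex.exp (zLine R y * x) := by
  refine integral_congr_ae (.of_forall fun y => ?_)
  have hpow : cpowR (S₀ * Real.exp (μ * t + x)) (zLine R y) =
      cpowR S₀ (zLine R y) * Complex.exp (zLine R y * (μ * t)) * Complex.exp (zLine R y * x) := by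
    rw [cpowR, cpowR, Real.log_mul hS₀.ne' (Real.exp_pos _).ne', Real.log_exp, ← Complex.exp_add,
      ← Complex.exp_add]
    push_cast
    ring_nf
  simp only [cashGreekDensity, hpow, Finset.prod_range_succ, Finset.prod_range_zero]
  push_cast
  ring

theorem norm_cexp_zLine_quadratic_le {a : ℝ} (ha : 0 ≤ a) (R y : ℝ) :
    ‖Complex.exp (a * (zLine R y * (zLine R y - 1)))‖ ≤ Real.exp (a * (R ^ 2 - R)) := by
  rw [Complex.norm_exp, Complex.re_ofReal_mul]
  gcongr
  have hre : (zLine R y * (zLine R y - 1)).re = R ^ 2 - R - y ^ 2 := by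
    simp [zLine]
    ring
  linarith [sq_nonneg y]

theorem integrable_cashGreekDensity (hσ2 : 0 ≤ σ2) (hp : HasPolyMoments (pCoef l) volume) (μ : ℝ)
    {t : ℝ} (ht : t ≤ T) : Integrable (cashGreekDensity σ2 T R μ S₀ l t) := by
  have hline : IsVerticalFamily univ R (zLine R) :=
    isVerticalFamily_zLine (g := id) R measurable_id fun _ => le_rfl
  have hquad : PolyGrowthOn (Icc 0 1) univ fun _ y => zLine R y * (zLine R y - 1) :=
    hline.polyGrowthOn.mul (by
      simpa only [sub_eq_add_neg] using (hline.add (.const (-1))).polyGrowthOn)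
  have hpow : PolyGrowthOn (Icc 0 1) univ fun _ y =>
      cpowR S₀ (zLine R y) * Complex.exp (zLine R y * (μ * t)) := by
    refine .of_bounded (C := Real.exp (R * Real.log S₀) * Real.exp (R * (μ * t)))
      fun _ _ y _ => Eq.le ?_
    rw [norm_mul, cpowR, Complex.norm_exp, Complex.norm_exp, ← Complex.ofReal_mul,
      Complex.re_mul_ofReal, Complex.re_mul_ofReal, zLine_re]
  have hgauss : PolyGrowthOn (Icc 0 1) univ fun _ y =>
      Complex.exp (σ2 / 2 * zLine R y * (zLine R y - 1) * (T - t)) := by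
    have ha : 0 ≤ σ2 / 2 * (T - t) := mul_nonneg (by positivity) (sub_nonneg.mpr ht)
    refine .of_bounded fun _ _ y _ => le_of_eq_of_le ?_ (norm_cexp_zLine_quadratic_le ha R y)
    push_cast
    ring_nf
  have hmeas : Measurable fun y => zLine R y * (zLine R y - 1) *
      (cpowR S₀ (zLine R y) * Complex.exp (zLine R y * (μ * t)) *
        Complex.exp (σ2 / 2 * zLine R y * (zLine R y - 1) * (T - t))) := by
    have := measurable_zLine R
    unfold cpowR
    fun_prop
  exact (Moderate.of_const_left hmeas (hquad.mul (hpow.mul hgauss))).integrable_mul hp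
    (.of_forall mem_univ) (left_mem_Icc.mpr zero_le_one)

theorem cexp_hedgeExponent_zero {μ c t : ℝ} {K : Measure ℝ} (hvar : c + ∫ x, x ^ 2 ∂K ≠ 0)
    (y z : ℂ) :
    Complex.exp (hedgeExponent μ c K T 0 y z t) =
      Complex.exp (-((μ + (c + ∫ x, x ^ 2 ∂K : ℝ) / 2) ^ 2 / (c + ∫ x, x ^ 2 ∂K : ℝ)) * (T - t)) *
      (Complex.exp (y * (μ * t)) *
        Complex.exp ((c + ∫ x, x ^ 2 ∂K : ℝ) / 2 * y * (y - 1) * (T - t))) *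
      (Complex.exp (z * (μ * t)) *
        Complex.exp ((c + ∫ x, x ^ 2 ∂K : ℝ) / 2 * z * (z - 1) * (T - t))) *
      Complex.exp ((c + ∫ x, x ^ 2 ∂K : ℝ) * t * (y + z) ^ 2 / 2) := by
  have hne : ((c + ∫ x, x ^ 2 ∂K : ℝ) : ℂ) ≠ 0 := Complex.ofReal_ne_zero.mpr hvar
  simp only [← Complex.exp_add, hedgeExponent, etaLK, gamLK, kappa_zero, kbar_zero]
  congr 1
  generalize ((c + ∫ x, x ^ 2 ∂K : ℝ) : ℂ) = σ2 at hne ⊢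
  field_simp
  ring

theorem integral_hedgeWeight_zero {μ c t : ℝ} {K : Measure ℝ} (hσ2 : σ2 = c + ∫ x, x ^ 2 ∂K)
    (hσ2pos : 0 < σ2) (hS₀ : 0 < S₀) (hp : HasPolyMoments (pCoef l) volume) (ht : t ∈ Icc 0 T) :
    ∫ w : ℝ × ℝ, zLine R w.1 * (zLine R w.1 - 1) * (zLine R w.2 * (zLine R w.2 - 1)) *
        hedgeWeight μ c K S₀ T 0 (zLine R w.1) (zLine R w.2) t * (pCoef l w.1 * pCoef l w.2) =
      (σ2 : ℂ)⁻¹ * (((Real.exp (-((μ + σ2 / 2) ^ 2 / σ2) * (T - t)) : ℝ) : ℂ) *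
        ∫ x : ℝ, (cashGreek σ2 T R l 2 t (S₀ * Real.exp (μ * t + x))) ^ 2
          ∂(gaussianReal 0 (Real.toNNReal (σ2 * t)))) := by
  have hvariance : ((Real.toNNReal (σ2 * t) : NNReal) : ℂ) = σ2 * t := by
    rw [← Complex.ofReal_mul]
    exact congrArg _ (Real.coe_toNNReal _ (mul_nonneg hσ2pos.le ht.1))
  simp only [cashGreek_two_mul_exp σ2 T R μ hS₀]
  rw [integral_gaussianReal_sq_integral_mul_cexp
    (integrable_cashGreekDensity hσ2pos.le hp μ ht.2) (measurable_zLine R) (zLine_re R),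
    ← Measure.volume_eq_prod, ← integral_const_mul, ← integral_const_mul]
  refine integral_congr_ae (.of_forall fun w => ?_)
  simp only [hedgeWeight, cexp_hedgeExponent_zero (hσ2 ▸ hσ2pos.ne'), kbar_zero, ← hσ2,
    cashGreekDensity, cpowR, add_mul _ _ (Real.log S₀ : ℂ), Complex.exp_add, hvariance,
    mul_one]
  push_cast
  ring

end CashGreek

section Expansion

theorem contDiff_comp_exp_mul_exp {f : ℝ → ℝ} {n : WithTop ℕ∞} (hf : ContDiffOn ℝ n f (Ioi 0))
    (r : ℝ) : ContDiff ℝ n fun x => f (Real.exp x) * Real.exp (r * x) :=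
  (contDiffOn_univ.mp (hf.comp Real.contDiff_exp.contDiffOn fun x _ => Real.exp_pos x)).mul
    (by fun_prop)

theorem IsExpMomentStrip.iteratedDerivWithin_two_hedgeError_zero_eq_cashGreek
    {μ c σ2 T R S₀ : ℝ} {K : Measure ℝ} [SFinite K] {J : Set ℝ} {l : ℝ → ℝ}
    (hJ : IsExpMomentStrip K J) (hc : 0 ≤ c) (hσ2 : σ2 = c + ∫ x, x ^ 2 ∂K) (hσ2pos : 0 < σ2)
    (h2 : (2 : ℝ) ∈ J) (hR : 2 * R ∈ J) (hS₀ : 0 < S₀) (hT : 0 ≤ T)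
    (hp : HasPolyMoments (pCoef l) volume) :
    iteratedDerivWithin 2 (hedgeError μ c K R S₀ T (pCoef l)) (Icc 0 1) 0 =
      ((σ2 * (∫ x, x ^ 4 ∂K) - (∫ x, x ^ 3 ∂K) ^ 2) / (2 * σ2) : ℝ) *
        ∫ t in (0 : ℝ)..T, ((Real.exp (-((μ + σ2 / 2) ^ 2 / σ2) * (T - t)) : ℝ) : ℂ) *
          ∫ x : ℝ, (cashGreek σ2 T R l 2 t (S₀ * Real.exp (μ * t + x))) ^ 2
            ∂(gaussianReal 0 (Real.toNNReal (σ2 * t))) := by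
  have hslice : EqOn (fun t => ∫ w : ℝ × ℝ, zLine R w.1 * (zLine R w.1 - 1) *
        (zLine R w.2 * (zLine R w.2 - 1)) *
        hedgeWeight μ c K S₀ T 0 (zLine R w.1) (zLine R w.2) t * (pCoef l w.1 * pCoef l w.2)) _
      (uIcc 0 T) := fun t ht =>
    integral_hedgeWeight_zero hσ2 hσ2pos hS₀ hp (uIcc_of_le hT ▸ ht)
  rw [hJ.iteratedDerivWithin_two_hedgeError_zero hc (hσ2 ▸ hσ2pos) h2 hR hp hT, ← hσ2,
    intervalIntegral.integral_congr hslice, intervalIntegral.integral_const_mul]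
  push_cast
  ring

theorem moment_det_div_eq_standardized {σ2 σ : ℝ} (hσ2 : 0 < σ2) (hσ : σ = √σ2) (m₃ m₄ : ℝ) :
    (σ2 * m₄ - m₃ ^ 2) / (2 * σ2) = 1 / 2 * σ ^ 4 * (m₄ / σ ^ 4 - (m₃ / σ ^ 3) ^ 2) := by
  have hσ_ne : σ ≠ 0 := hσ ▸ (Real.sqrt_pos.mpr hσ2).ne'
  have hσ_sq : σ ^ 2 = σ2 := hσ ▸ Real.sq_sqrt hσ2.le
  rw [← hσ_sq]
  field_simp

end Expansion

end

/-- second-order expansion of the mean squared hedging error of the variance-optimal hedge (Theorem `errVOapprox`). -/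
theorem variance_optimal_hedge_error_expansion
    (μ c : ℝ) (hc : 0 ≤ c) (K : MeasureTheory.Measure ℝ)
    (hK0 : K {0} = 0)
    (hKmin : ∫⁻ x : ℝ, ENNReal.ofReal (min 1 (x ^ 2)) ∂K ≠ ⊤)
    (R : ℝ) (hR : R ≠ 0) (a b : ℝ)
    (h0 : (0 : ℝ) ∈ Set.Ioo a b) (h2 : (2 : ℝ) ∈ Set.Ioo a b)
    (h2R : 2 * R ∈ Set.Ioo a b)
    (hK5 : ∫⁻ x in {x : ℝ | 1 ≤ |x|}, ENNReal.ofReal (|x| ^ 5) ∂K ≠ ⊤)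
    (hKexp : ∀ s ∈ Set.Ioo a b,
      ∫⁻ x in {x : ℝ | 1 ≤ |x|}, ENNReal.ofReal (Real.exp (s * x)) ∂K ≠ ⊤)
    (σ2 : ℝ) (hσ2 : σ2 = c + ∫ x : ℝ, x ^ 2 ∂K) (hσ2pos : 0 < σ2)
    (σ m s3 s4 : ℝ) (hσ : σ = Real.sqrt σ2) (hm : m = (μ + σ2 / 2) / σ2)
    (hs3 : s3 = (∫ x : ℝ, x ^ 3 ∂K) / σ ^ 3) (hs4 : s4 = (∫ x : ℝ, x ^ 4 ∂K) / σ ^ 4)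
    (f : ℝ → ℝ) (hf : ContDiffOn ℝ (⊤ : ℕ∞) f (Set.Ioi 0))
    (l : ℝ → ℝ) (hl : l = fun x => f (Real.exp x) * Real.exp (-R * x))
    (hlint : ∀ n : ℕ, Integrable (iteratedDeriv n l))
    (T S₀ : ℝ) (hT : 0 < T) (hS₀ : 0 < S₀)
    (eps2 : ℝ → ℂ)
    (heps2 : ∀ lam : ℝ, eps2 lam =
      ∫ u : ℝ, ∫ v : ℝ, ∫ t in (0 : ℝ)..T,
        cpowR S₀ (zLine R u + zLine R v) *
          (kbar μ c K lam (zLine R u) (zLine R v) -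
            kbar μ c K lam (zLine R u) 1 * kbar μ c K lam (zLine R v) 1 /
              kbar μ c K lam 1 1) *
          Complex.exp (kappa μ c K lam (zLine R u + zLine R v) * (t : ℂ) +
            (etaLK μ c K lam (zLine R u) + etaLK μ c K lam (zLine R v) -
              kappa μ c K lam 1 ^ 2 / kbar μ c K lam 1 1) *
              ((T : ℂ) - (t : ℂ))) *
          pCoef l u * pCoef l v) :
    ContDiffOn ℝ 2 eps2 (Set.Icc 0 1) ∧
    eps2 0 = 0 ∧
    iteratedDerivWithin 1 eps2 (Set.Icc 0 1) 0 = 0 ∧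
    (1 / 2 : ℂ) * iteratedDerivWithin 2 eps2 (Set.Icc 0 1) 0 =
      (1 / 4 : ℂ) * (σ : ℂ) ^ 4 * ((s4 : ℂ) - (s3 : ℂ) ^ 2) *
        ∫ t in (0 : ℝ)..T,
          ((Real.exp (-((μ + σ2 / 2) ^ 2 / σ2) * (T - t)) : ℝ) : ℂ) *
          ∫ x : ℝ, (cashGreek σ2 T R l 2 t (S₀ * Real.exp (μ * t + x))) ^ 2
            ∂(gaussianReal 0 (Real.toNNReal (σ2 * t))) := by
  have := sFinite_of_lintegral_min_sq_ne_top hK0 hKmin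
  have hJ := isExpMomentStrip_Ioo h0 hKmin hKexp
  have hvar : 0 < c + ∫ x, x ^ 2 ∂K := hσ2 ▸ hσ2pos
  have hp : HasPolyMoments (pCoef l) volume := hasPolyMoments_pCoef
    (hl ▸ contDiff_comp_exp_mul_exp hf (-R)) hlint
  have heps : EqOn eps2 (hedgeError μ c K R S₀ T (pCoef l)) (Icc 0 1) := fun lam hlam =>
    (heps2 lam).trans (hJ.hedgeError_eq_iterated_integral hc hvar h2 h2R hp hT.le hlam).symm
  have hzero : (0 : ℝ) ∈ Icc (0 : ℝ) 1 := left_mem_Icc.mpr zero_le_one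
  refine ⟨(hJ.contDiffOn_hedgeError hc hvar h2 h2R hp 2).congr heps,
    (heps hzero).trans (hedgeError_zero ..),
    (iteratedDerivWithin_congr heps hzero).trans
      (hJ.iteratedDerivWithin_one_hedgeError_zero hc hvar h2 h2R hp), ?_⟩
  rw [iteratedDerivWithin_congr heps hzero,
    hJ.iteratedDerivWithin_two_hedgeError_zero_eq_cashGreek hc hσ2 hσ2pos h2 h2R hS₀ hT.le hp,
    moment_det_div_eq_standardized hσ2pos hσ, ← hs3, ← hs4]
  push_cast
  ring
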